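/- For integers n ≥ k ≥ d ≥ 1, the set C_{n,k,d} descends to a ℤ[t_1,…,t_k]-module basis of the quotient ℤ[x_1,…,x_n,y_1,…,y_d,t_1,…,t_k]^{S_d}/I_{n,k,d}; in particular, this quotient is a free ℤ[t_1,…,t_k]-module of rank (k!/(k−d)!)·Stir(n,d). -/

import Mathlib

open MvPolynomial

set_option synthInstance.maxHeartbeats 1000000
set_option maxHeartbeats 4000000

/-- Stirling numbers of the second kind: the number of set partitions of an `n`-element
set into `d` nonempty blocks, via the standard recurrence. -/
def stirling2 : ℕ → ℕ → ℕ
  | 0, 0 => 1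
  | 0, _ + 1 => 0
  | _ + 1, 0 => 0
  | n + 1, d + 1 => (d + 1) * stirling2 n (d + 1) + stirling2 n d

/-- The elementary symmetric polynomial `e_r` in the x-variables, inside `ℤ[x,y,t]`. -/
noncomputable def eX3Z (n k d r : ℕ) : MvPolynomial (Fin n ⊕ Fin d ⊕ Fin k) ℤ :=
  rename Sum.inl (esymm (Fin n) ℤ r)

/-- The complete homogeneous symmetric polynomial `h_r` in the y-variables,
inside `ℤ[x,y,t]`. -/
noncomputable def hY3Z (n k d r : ℕ) : MvPolynomial (Fin n ⊕ Fin d ⊕ Fin k) ℤ :=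
  rename (Sum.inr ∘ Sum.inl) (hsymm (Fin d) ℤ r)

/-- The elementary symmetric polynomial `e_r` in the y-variables, inside `ℤ[x,y,t]`. -/
noncomputable def eY3Z (n k d r : ℕ) : MvPolynomial (Fin n ⊕ Fin d ⊕ Fin k) ℤ :=
  rename (Sum.inr ∘ Sum.inl) (esymm (Fin d) ℤ r)

/-- The elementary symmetric polynomial `e_r` in the t-variables, inside `ℤ[x,y,t]`. -/
noncomputable def eT3Z (n k d r : ℕ) : MvPolynomial (Fin n ⊕ Fin d ⊕ Fin k) ℤ :=
  rename (Sum.inr ∘ Sum.inr) (esymm (Fin k) ℤ r)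

/-- `Σ_{a+b=r} (−1)^b e_a(t_1,…,t_k)·h_b(y_1,…,y_d)`, over `ℤ`. -/
noncomputable def genTY3Z (n k d r : ℕ) : MvPolynomial (Fin n ⊕ Fin d ⊕ Fin k) ℤ :=
  ∑ j ∈ Finset.range (r + 1),
    (-1 : MvPolynomial (Fin n ⊕ Fin d ⊕ Fin k) ℤ) ^ j * (eT3Z n k d (r - j) * hY3Z n k d j)

/-- `Σ_{a+b=r} (−1)^b e_a(x_1,…,x_n)·h_b(y_1,…,y_d)`, over `ℤ`. -/
noncomputable def genXY3Z (n k d r : ℕ) : MvPolynomial (Fin n ⊕ Fin d ⊕ Fin k) ℤ :=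
  ∑ j ∈ Finset.range (r + 1),
    (-1 : MvPolynomial (Fin n ⊕ Fin d ⊕ Fin k) ℤ) ^ j * (eX3Z n k d (r - j) * hY3Z n k d j)

/-- `Σ_{j=0}^{d} (−1)^j x_i^{d−j} e_j(y_1,…,y_d)`, over `ℤ`. -/
noncomputable def genPow3Z (n k d : ℕ) (i : Fin n) : MvPolynomial (Fin n ⊕ Fin d ⊕ Fin k) ℤ :=
  ∑ j ∈ Finset.range (d + 1),
    (-1 : MvPolynomial (Fin n ⊕ Fin d ⊕ Fin k) ℤ) ^ j * (X (Sum.inl i) ^ (d - j) * eY3Z n k d j)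

/-- The generating set for the ideal `I_{n,k,d}` inside `ℤ[x,y,t]`. -/
def Jtgens3Z (n k d : ℕ) : Set (MvPolynomial (Fin n ⊕ Fin d ⊕ Fin k) ℤ) :=
  {p | ∃ r, k - d < r ∧ p = genTY3Z n k d r} ∪
  {p | ∃ r, n - d < r ∧ p = genXY3Z n k d r} ∪
  {p | ∃ i : Fin n, p = genPow3Z n k d i}

/-- The permutation of the variable index set `Fin n ⊕ Fin d ⊕ Fin k` induced by a
permutation of the y-indices. -/
def permY3 (n k d : ℕ) (g : Equiv.Perm (Fin d)) :
    (Fin n ⊕ Fin d ⊕ Fin k) ≃ (Fin n ⊕ Fin d ⊕ Fin k) :=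
  Equiv.sumCongr (Equiv.refl (Fin n)) (Equiv.sumCongr g (Equiv.refl (Fin k)))

/-- The subring of `S_d`-invariants of `ℤ[x_1,…,x_n,y_1,…,y_d,t_1,…,t_k]`, where `S_d`
permutes the variables `y_1,…,y_d` and fixes all other variables. -/
noncomputable def invZ3 (n k d : ℕ) :
    Subalgebra ℤ (MvPolynomial (Fin n ⊕ Fin d ⊕ Fin k) ℤ) where
  carrier := {f | ∀ g : Equiv.Perm (Fin d), rename (⇑(permY3 n k d g)) f = f}
  mul_mem' := fun ha hb g => by rw [map_mul, ha g, hb g]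
  add_mem' := fun ha hb g => by rw [map_add, ha g, hb g]
  one_mem' := fun g => by rw [map_one]
  zero_mem' := fun g => by rw [map_zero]
  algebraMap_mem' := fun r g => by rw [MvPolynomial.algebraMap_eq, rename_C]

/-- The map `ℤ[t_1,…,t_k] → ℤ[x,y,t]^{S_d}` sending `t_i` to `t_i`. -/
noncomputable def tHomZ (n k d : ℕ) :
    MvPolynomial (Fin k) ℤ →ₐ[ℤ] ↥(invZ3 n k d) :=
  AlgHom.codRestrict (rename (Sum.inr ∘ Sum.inr)) (invZ3 n k d) (fun f g => by
    show rename (⇑(permY3 n k d g)) (rename (Sum.inr ∘ Sum.inr) f) = _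
    rw [rename_rename]
    congr 1)

/-- `ℤ[x,y,t]^{S_d}` is a `ℤ[t_1,…,t_k]`-algebra via `tHomZ`. -/
noncomputable instance invZ3.algebraT (n k d : ℕ) :
    Algebra (MvPolynomial (Fin k) ℤ) ↥(invZ3 n k d) :=
  (tHomZ n k d).toRingHom.toAlgebra

/-- An `(n,d)`-staircase: a shuffle of the sequence `(0,1,…,d−1)` with `n−d` copies
of `d−1`, i.e. the values `0, 1, …, d−1` appear in this order at some increasing set of
`d` positions and every other entry equals `d−1`. -/
def IsStaircase (n d : ℕ) (s : Fin n → ℕ) : Prop :=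
  ∃ φ : Fin d → Fin n, StrictMono φ ∧ (∀ t, s (φ t) = t) ∧
    ∀ j : Fin n, (∀ t, j ≠ φ t) → s j = d - 1

/-- An `(n,d)`-substaircase sequence: componentwise at most some `(n,d)`-staircase. -/
def IsSubstaircase (n d : ℕ) (a : Fin n → ℕ) : Prop :=
  ∃ s, IsStaircase n d s ∧ ∀ j, a j ≤ s j

/-- Complete homogeneous symmetric polynomial indexed by an integer
(interpreted as zero for a negative index). -/
noncomputable def hsymmZidx (σ : Type*) [Fintype σ] [DecidableEq σ] (R : Type*)
    [CommSemiring R] (m : ℤ) : MvPolynomial σ R :=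
  if 0 ≤ m then hsymm σ R m.toNat else 0

/-- The Schur polynomial `s_λ` in the `d` variables `y_1,…,y_d` over `ℤ`, defined via the
Jacobi–Trudi determinant `det(h_{λ_i − i + j})_{1 ≤ i,j ≤ d}` (for `λ` a partition with at
most `d` parts, recorded as a weakly decreasing function `Fin d → ℕ`). -/
noncomputable def schurPoly (d : ℕ) (lam : Fin d → ℕ) : MvPolynomial (Fin d) ℤ :=
  (Matrix.of fun i j : Fin d =>
    hsymmZidx (Fin d) ℤ ((lam i : ℤ) - ((i : ℕ) : ℤ) + ((j : ℕ) : ℤ))).det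

/-- The set `C_{n,k,d}`, viewed inside `ℤ[x,y,t]`: products of substaircase monomials in
the x-variables with Schur polynomials `s_λ(y_1,…,y_d)` for partitions `λ ⊆ (k−d)^d`. -/
def CsetZ3 (n k d : ℕ) : Set (MvPolynomial (Fin n ⊕ Fin d ⊕ Fin k) ℤ) :=
  {p | ∃ a : Fin n → ℕ, IsSubstaircase n d a ∧
    ∃ lam : Fin d → ℕ, Antitone lam ∧ (∀ i, lam i ≤ k - d) ∧
      p = (∏ j, X (Sum.inl j) ^ a j) * rename (Sum.inr ∘ Sum.inl) (schurPoly d lam)}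

/-!
Write `R = ℤ[t]`. In the quotient, the relations say that `∏ (T - x_i)` is divisible by the monic
polynomial `f` with roots `y_1, …, y_d`, and that every `x_i` is a root of `f`. Peeling off one
variable at a time, by splitting off the root `x_n` of `f` or passing to the annihilator of
`f(x_n)`, shows that the substaircase monomials span the quotient over the ring of symmetric
polynomials in `y`. The remaining relation between `t` and `y` is a linear recurrence with
coefficients in `R` for the `h_m(y)`, and it straightens every Jacobi–Trudi determinant into those
of partitions in a `d × (k - d)` box. Hence `C_{n,k,d}` spans.

The relations vanish at the points `y = t ∘ u`, `x = y ∘ φ`, with `u` strictly increasing and `φ`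
surjective. Interpolation at these points gives as many linearly independent elements as there are
points, and a count shows that `C_{n,k,d}` is indexed by equally many elements. A spanning family of
that size is independent, by the Orzech property of `R`.
-/

open scoped Polynomial PowerSeries

section GeneratingFunctions

variable {σ S S' : Type*} [CommRing S] [CommRing S']

lemma map_intAeval (f : S →+* S') (x : σ → S) (p : MvPolynomial σ ℤ) :
    f (aeval x p) = aeval (f ∘ x) p :=
  DFunLike.congr_fun (comp_aeval x f.toIntAlgHom) p

/-- The power series `∑ₘ hₘ Tᵐ` attached to a sequence indexed by the integers. -/
noncomputable def natSeries (h : ℤ → S) : S⟦X⟧ :=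
  PowerSeries.mk fun m => h m

lemma map_natSeries (f : S →+* S') (h : ℤ → S) :
    PowerSeries.map f (natSeries h) = natSeries (f ∘ h) :=
  PowerSeries.ext fun m => by simp [natSeries]

lemma coeff_natSeries_mul_coe {h : ℤ → S} (hneg : ∀ z < 0, h z = 0) {P : S[X]} {N : ℕ}
    (hP : P.natDegree < N) (a : ℕ) :
    PowerSeries.coeff a (natSeries h * (P : S⟦X⟧)) =
      ∑ b ∈ Finset.range N, P.coeff b * h (a - b) := by
  rw [mul_comm, PowerSeries.coeff_mul, Finset.Nat.sum_antidiagonal_eq_sum_range_succ_mk]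
  have hsum : ∀ M ≤ a + N + 1, (∀ b, M ≤ b → P.coeff b * h (a - b) = 0) →
      ∑ b ∈ Finset.range (a + N + 1), P.coeff b * h (a - b) =
        ∑ b ∈ Finset.range M, P.coeff b * h (a - b) := fun M hM h0 =>
    (Finset.sum_subset (Finset.range_mono hM) fun b _ hb =>
      h0 b (by simpa using hb)).symm
  rw [← hsum N (by lia) fun b hb => by
      rw [Polynomial.coeff_eq_zero_of_natDegree_lt (hP.trans_le hb), zero_mul],
    hsum (a + 1) (by lia) fun b hb => by rw [hneg _ (by lia), mul_zero]]
  refine Finset.sum_congr rfl fun b hb => ?_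
  rw [Polynomial.coeff_coe, natSeries, PowerSeries.coeff_mk,
    Nat.cast_sub (Finset.mem_range_succ_iff.1 hb)]

lemma mk_pow_mul_one_sub (a : S) :
    PowerSeries.mk (fun m => a ^ m) * (1 - PowerSeries.C a * PowerSeries.X) = 1 := by
  ext m
  rw [mul_sub, mul_one, mul_left_comm, map_sub, PowerSeries.coeff_C_mul, PowerSeries.coeff_one]
  cases m with
  | zero => simp
  | succ m => simp [PowerSeries.coeff_succ_mul_X, pow_succ']

lemma reflect_dvd_reflect_of_coeff_mul_eq_zero {n d : ℕ} (hdn : d ≤ n) {E B : S[X]} {H : S⟦X⟧}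
    (hE : E.natDegree ≤ d) (hHE : H * (E : S⟦X⟧) = 1)
    (hB : ∀ r, n - d < r → PowerSeries.coeff r (H * (B : S⟦X⟧)) = 0) :
    E.reflect d ∣ B.reflect n := by
  set G : S[X] := PowerSeries.trunc (n - d + 1) (H * (B : S⟦X⟧))
  have hG : (G : S⟦X⟧) = H * (B : S⟦X⟧) := by
    ext r
    rw [Polynomial.coeff_coe, PowerSeries.coeff_trunc]
    split_ifs with h
    · rfl
    · rw [hB r (by lia)]
  have hB' : B = E * G := by
    apply Polynomial.coe_injective S
    rw [Polynomial.coe_mul, hG, mul_left_comm, ← mul_assoc, hHE, one_mul]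
  have hGdeg : G.natDegree ≤ n - d :=
    Nat.lt_succ_iff.1 (PowerSeries.natDegree_trunc_lt _ _)
  rw [hB', ← Nat.add_sub_of_le hdn, Polynomial.reflect_mul _ _ hE hGdeg]
  exact dvd_mul_right _ _

lemma aeval_reflect [Algebra S S'] {P : S[X]} {d : ℕ} (hP : P.natDegree ≤ d) (z : S') :
    Polynomial.aeval z (P.reflect d) =
      ∑ j ∈ Finset.range (d + 1), P.coeff j • z ^ (d - j) := by
  have hdeg : (P.reflect d).natDegree < d + 1 :=
    Nat.lt_succ_iff.2 (Polynomial.natDegree_reflect_le.trans (max_le le_rfl hP))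
  rw [Polynomial.aeval_eq_sum_range' hdeg, ← Finset.sum_range_reflect]
  refine Finset.sum_congr rfl fun j hj => ?_
  rw [Nat.add_sub_cancel, Polynomial.coeff_reflect, Polynomial.revAt_le (Nat.sub_le d j),
    Nat.sub_sub_self (Finset.mem_range_succ_iff.1 hj)]

/-- The polynomial `∏ᵢ (1 - xᵢ T)`, whose coefficients are the signed elementary symmetric
polynomials in the family `x`. -/
noncomputable def reciprocalPoly [Fintype σ] (x : σ → S) : S[X] :=
  ∏ i, (1 - Polynomial.C (x i) * Polynomial.X)

lemma coeff_prod_one_sub (s : Finset σ) (x : σ → S) (m : ℕ) :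
    (∏ i ∈ s, (1 - Polynomial.C (x i) * Polynomial.X)).coeff m =
      (-1) ^ m * ∑ u ∈ s.powersetCard m, ∏ i ∈ u, x i := by
  simp only [sub_eq_add_neg, ← neg_mul, ← map_neg, Finset.prod_one_add, Finset.prod_mul_distrib,
    Finset.prod_const, ← map_prod, Polynomial.finsetSum_coeff, Polynomial.coeff_C_mul_X_pow]
  rw [← Finset.sum_filter, Finset.mul_sum, Finset.powersetCard_eq_filter]
  refine Finset.sum_congr (by simp only [eq_comm]) fun u hu => ?_
  rw [Finset.prod_neg, (Finset.mem_filter.1 hu).2]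

lemma natDegree_prod_one_sub_le (s : Finset σ) (x : σ → S) :
    (∏ i ∈ s, (1 - Polynomial.C (x i) * Polynomial.X)).natDegree ≤ s.card := by
  refine (Polynomial.natDegree_prod_le _ _).trans ?_
  rw [Finset.card_eq_sum_ones]
  exact Finset.sum_le_sum fun i _ => by compute_degree

variable [Fintype σ]

lemma coeff_reciprocalPoly (x : σ → S) (m : ℕ) :
    (reciprocalPoly x).coeff m = (-1) ^ m * aeval x (esymm σ ℤ m) := by
  simp only [reciprocalPoly, coeff_prod_one_sub, esymm, map_sum, map_prod, aeval_X]

lemma natDegree_reciprocalPoly_le (x : σ → S) :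
    (reciprocalPoly x).natDegree ≤ Fintype.card σ :=
  natDegree_prod_one_sub_le _ x

lemma reflect_reciprocalPoly (x : σ → S) :
    (reciprocalPoly x).reflect (Fintype.card σ) =
      ∏ i, (Polynomial.X - Polynomial.C (x i)) := by
  classical
  suffices ∀ s : Finset σ,
      (∏ i ∈ s, (1 - Polynomial.C (x i) * Polynomial.X)).reflect s.card =
        ∏ i ∈ s, (Polynomial.X - Polynomial.C (x i)) from this Finset.univ
  intro s
  induction s using Finset.induction_on with
  | empty => simp
  | insert a s ha ih =>
    rw [Finset.prod_insert ha, Finset.prod_insert ha, Finset.card_insert_of_notMem ha, add_comm,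
      Polynomial.reflect_mul _ _ (by compute_degree) (natDegree_prod_one_sub_le s x), ih]
    simp [Polynomial.reflect_sub, Polynomial.reflect_C_mul]

lemma sum_neg_one_pow_mul_pow_mul_esymm (x : σ → S) (z : S) :
    ∑ j ∈ Finset.range (Fintype.card σ + 1),
      (-1) ^ j * (z ^ (Fintype.card σ - j) * aeval x (esymm σ ℤ j)) = ∏ i, (z - x i) := by
  have h := aeval_reflect (natDegree_reciprocalPoly_le x) z
  rw [reflect_reciprocalPoly, map_prod] at h
  simp only [map_sub, Polynomial.aeval_X, Polynomial.aeval_C, Algebra.algebraMap_self_apply] at h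
  rw [h]
  refine Finset.sum_congr rfl fun j _ => ?_
  rw [coeff_reciprocalPoly, smul_eq_mul, mul_assoc, mul_comm (z ^ _)]

/-- The alternating convolution `∑_{a + b = r} (-1)ᵇ eₐ(x) h_b`. -/
noncomputable def esymmConv (x : σ → S) (h : ℤ → S) (r : ℕ) : S :=
  ∑ j ∈ Finset.range (r + 1), (-1) ^ j * (aeval x (esymm σ ℤ (r - j)) * h j)

lemma map_esymmConv (f : S →+* S') (x : σ → S) (h : ℤ → S) (r : ℕ) :
    f (esymmConv x h r) = esymmConv (f ∘ x) (f ∘ h) r := by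
  simp only [esymmConv, map_sum, map_mul, map_pow, map_neg, map_one, map_intAeval,
    Function.comp_apply]

lemma esymmConv_eq_coeff (x : σ → S) (h : ℤ → S) (r : ℕ) :
    esymmConv x h r =
      (-1) ^ r * PowerSeries.coeff r (natSeries h * (reciprocalPoly x : S⟦X⟧)) := by
  rw [esymmConv, PowerSeries.coeff_mul, Finset.Nat.sum_antidiagonal_eq_sum_range_succ_mk,
    Finset.mul_sum]
  refine Finset.sum_congr rfl fun j hj => ?_
  obtain ⟨c, rfl⟩ := Nat.exists_eq_add_of_le (Finset.mem_range_succ_iff.1 hj)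
  have hc : (-1 : S) ^ c * (-1) ^ c = 1 := by rw [← mul_pow]; simp
  rw [Polynomial.coeff_coe, coeff_reciprocalPoly, natSeries, PowerSeries.coeff_mk,
    Nat.add_sub_cancel_left, pow_add]
  linear_combination (-(-1) ^ j * h j * aeval x (esymm σ ℤ c)) * hc

variable [DecidableEq σ]

/-- The value at the family `x` of the complete homogeneous symmetric polynomial `h_z`, which is
zero for `z < 0`. -/
noncomputable def hsymmVal (x : σ → S) (z : ℤ) : S :=
  aeval x (hsymmZidx σ ℤ z)

lemma hsymmVal_natCast (x : σ → S) (m : ℕ) : hsymmVal x m = aeval x (hsymm σ ℤ m) := by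
  simp [hsymmVal, hsymmZidx]

lemma hsymmVal_of_neg (x : σ → S) {z : ℤ} (hz : z < 0) : hsymmVal x z = 0 := by
  simp [hsymmVal, hsymmZidx, hz.not_ge]

lemma natSeries_hsymmVal_eq_prod (x : σ → S) :
    natSeries (hsymmVal x) = ∏ i, PowerSeries.mk fun m => x i ^ m := by
  ext m
  rw [PowerSeries.coeff_prod, natSeries, PowerSeries.coeff_mk, hsymmVal_natCast, hsymm, map_sum]
  simp only [PowerSeries.coeff_mk]
  rw [← Finset.sum_coe_sort (Finset.finsuppAntidiag Finset.univ m)]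
  symm
  refine Fintype.sum_equiv ((Equiv.subtypeEquivRight fun f => ?_).trans
    (Sym.equivNatSum σ m).symm) _ _ ?_
  · simp [Finset.mem_finsuppAntidiag, Finsupp.sum_fintype]
  · rintro ⟨f, hf⟩
    simp only [Equiv.trans_apply]
    change _ = aeval x ((Multiset.map X (Finsupp.toMultiset f)).prod)
    rw [Finsupp.toMultiset_map, Finsupp.prod_toMultiset, Finsupp.prod_mapDomain_index (by simp)
      (by simp [pow_add]), Finsupp.prod_fintype _ _ (by simp)]
    simp

lemma natSeries_hsymmVal_mul_reciprocalPoly (x : σ → S) :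
    natSeries (hsymmVal x) * (reciprocalPoly x : S⟦X⟧) = 1 := by
  rw [natSeries_hsymmVal_eq_prod, reciprocalPoly, ← Polynomial.coeToPowerSeries.ringHom_apply,
    map_prod, ← Finset.prod_mul_distrib]
  exact Finset.prod_eq_one fun i _ => by simpa using mk_pow_mul_one_sub (x i)

lemma natSeries_hsymmVal_mul_reciprocalPoly_of_injective {τ : Type*} [Fintype τ] [DecidableEq τ]
    (x : σ → S) {ι : τ → σ} (hι : Function.Injective ι) :
    natSeries (hsymmVal (x ∘ ι)) * (reciprocalPoly x : S⟦X⟧) =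
      ((∏ i ∈ (Finset.univ.image ι)ᶜ, (1 - Polynomial.C (x i) * Polynomial.X) : S[X]) : S⟦X⟧) := by
  rw [reciprocalPoly, ← Finset.prod_mul_prod_compl (Finset.univ.image ι),
    Finset.prod_image hι.injOn, Polynomial.coe_mul, ← mul_assoc]
  convert one_mul _
  exact natSeries_hsymmVal_mul_reciprocalPoly (x ∘ ι)

omit [DecidableEq σ] in
lemma esymmConv_hsymmVal_comp_eq_zero {τ : Type*} [Fintype τ] [DecidableEq τ]
    (x : σ → S) {ι : τ → σ} (hι : Function.Injective ι) {r : ℕ}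
    (hr : Fintype.card σ - Fintype.card τ < r) :
    esymmConv x (hsymmVal (x ∘ ι)) r = 0 := by
  classical
  rw [esymmConv_eq_coeff, natSeries_hsymmVal_mul_reciprocalPoly_of_injective x hι,
    Polynomial.coeff_coe, Polynomial.coeff_eq_zero_of_natDegree_lt, mul_zero]
  refine (natDegree_prod_one_sub_le _ x).trans_lt ?_
  rwa [Finset.card_compl, Finset.card_image_of_injective _ hι, Finset.card_univ]

end GeneratingFunctions

section Bialternant

variable {S S' : Type*} [CommRing S] [CommRing S'] {d : ℕ}

/-- The Jacobi–Trudi determinant `det (h_{mᵢ - i + j})` of a sequence `h`, for an arbitrary (not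
necessarily decreasing) tuple `m` of row indices. -/
def jacobiTrudi (h : ℤ → S) (m : Fin d → ℕ) : S :=
  (Matrix.of fun i j : Fin d => h ((m i : ℤ) - (i : ℕ) + (j : ℕ))).det

/-- The alternant `det (yᵢ ^ (mⱼ + (d - 1 - j)))`, which is a Vandermonde determinant for
`m = 0`. -/
def alternant (y : Fin d → S) (m : Fin d → ℕ) : S :=
  (Matrix.of fun i j : Fin d => y i ^ (m j + (j.rev : ℕ))).det

lemma map_jacobiTrudi (f : S →+* S') (h : ℤ → S) (m : Fin d → ℕ) :
    f (jacobiTrudi h m) = jacobiTrudi (f ∘ h) m :=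
  f.map_det _

lemma jacobiTrudi_zero {h : ℤ → S} (hneg : ∀ z < 0, h z = 0) (h0 : h 0 = 1) :
    jacobiTrudi h (0 : Fin d → ℕ) = 1 := by
  rw [jacobiTrudi, Matrix.det_of_isUpperTriangular]
  · exact Finset.prod_eq_one fun i _ => by simp [h0]
  · intro i j hji
    exact hneg _ (by simpa using hji)

lemma alternant_zero_ne_zero [IsDomain S] {y : Fin d → S} (hy : Function.Injective y) :
    alternant y 0 ≠ 0 := by
  have hperm : alternant y 0 =
      ((Matrix.vandermonde y).submatrix id (Fin.revPerm : Equiv.Perm (Fin d))).det := by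
    refine congrArg Matrix.det (Matrix.ext fun i j => ?_)
    simp [Matrix.vandermonde]
  have hne := Matrix.det_vandermonde_ne_zero_iff.2 hy
  rw [hperm, Matrix.det_permute']
  rcases Int.units_eq_one_or (Equiv.Perm.sign (Fin.revPerm : Equiv.Perm (Fin d))) with h | h <;>
    simpa [h] using hne

lemma mk_pow_eq_natSeries_mul {σ : Type*} [Fintype σ] [DecidableEq σ] (y : σ → S) (j : σ) :
    PowerSeries.mk (fun m => y j ^ m) = natSeries (hsymmVal y) *
      ((∏ i ∈ Finset.univ.erase j, (1 - Polynomial.C (y i) * Polynomial.X) : S[X]) : S⟦X⟧) := by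
  have hall := natSeries_hsymmVal_mul_reciprocalPoly y
  rw [reciprocalPoly, ← Finset.mul_prod_erase _ _ (Finset.mem_univ j), Polynomial.coe_mul] at hall
  have hone := mk_pow_mul_one_sub (y j)
  have hcoe : ((1 - Polynomial.C (y j) * Polynomial.X : S[X]) : S⟦X⟧) =
      1 - PowerSeries.C (y j) * PowerSeries.X := by simp
  rw [hcoe] at hall
  linear_combination (-PowerSeries.mk fun m => y j ^ m) * hall + (natSeries (hsymmVal y) *
    ((∏ i ∈ Finset.univ.erase j, (1 - Polynomial.C (y i) * Polynomial.X) : S[X]) : S⟦X⟧)) * hone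

lemma pow_eq_sum_coeff_mul_hsymmVal {σ : Type*} [Fintype σ] [DecidableEq σ] (y : σ → S) (j : σ)
    (a : ℕ) :
    y j ^ a = ∑ b ∈ Finset.range (Fintype.card σ),
      (∏ i ∈ Finset.univ.erase j, (1 - Polynomial.C (y i) * Polynomial.X)).coeff b *
        hsymmVal y (a - b) := by
  have hdeg : (∏ i ∈ Finset.univ.erase j, (1 - Polynomial.C (y i) * Polynomial.X)).natDegree <
      Fintype.card σ := by
    refine (natDegree_prod_one_sub_le _ y).trans_lt ?_
    rw [Finset.card_erase_of_mem (Finset.mem_univ j), Finset.card_univ]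
    exact Nat.sub_lt (Fintype.card_pos_iff.2 ⟨j⟩) one_pos
  rw [← coeff_natSeries_mul_coe (fun z => hsymmVal_of_neg y) hdeg, ← mk_pow_eq_natSeries_mul,
    PowerSeries.coeff_mk]

lemma exists_alternant_eq_mul_jacobiTrudi (y : Fin d → S) :
    ∃ D : S, ∀ m : Fin d → ℕ, alternant y m = D * jacobiTrudi (hsymmVal y) m := by
  let q : Fin d → Fin d → S := fun j l =>
    (∏ i ∈ Finset.univ.erase j, (1 - Polynomial.C (y i) * Polynomial.X)).coeff l.rev
  refine ⟨(Matrix.of q).det, fun m => ?_⟩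
  rw [jacobiTrudi, ← Matrix.det_transpose (Matrix.of fun i j : Fin d => hsymmVal y _),
    ← Matrix.det_mul]
  refine congrArg Matrix.det (Matrix.ext fun j i => ?_)
  rw [Matrix.of_apply, pow_eq_sum_coeff_mul_hsymmVal, Fintype.card_fin, Finset.sum_range,
    ← Equiv.sum_comp Fin.revPerm, Matrix.mul_apply]
  refine Finset.sum_congr rfl fun l _ => ?_
  simp only [q, Fin.revPerm_apply, Matrix.of_apply, Matrix.transpose_apply]
  congr 2
  simp only [Fin.val_rev]
  omega

lemma alternant_eq_mul_jacobiTrudi (y : Fin d → S) (m : Fin d → ℕ) :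
    alternant y m = alternant y 0 * jacobiTrudi (hsymmVal y) m := by
  obtain ⟨D, hD⟩ := exists_alternant_eq_mul_jacobiTrudi y
  rw [hD 0, jacobiTrudi_zero (fun z => hsymmVal_of_neg y)
    (by simpa [MvPolynomial.hsymm_zero] using hsymmVal_natCast y 0), mul_one, hD m]

-- Multiplying `f` by the Vandermonde determinant antisymmetrizes its monomials into alternants.
lemma eq_sum_mul_jacobiTrudi_of_forall_perm [IsDomain S] {y : Fin d → S}
    (hy : Function.Injective y) {ι : Type*} (s : Finset ι) (c : ι → S) (m : ι → Fin d → ℕ) {f : S}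
    (hf : ∀ g : Equiv.Perm (Fin d), f = ∑ i ∈ s, c i * ∏ j, y (g j) ^ m i j) :
    f = ∑ i ∈ s, c i * jacobiTrudi (hsymmVal y) (m i) := by
  apply mul_left_cancel₀ (alternant_zero_ne_zero hy)
  calc alternant y 0 * f
      = ∑ g : Equiv.Perm (Fin d), Equiv.Perm.sign g • (∏ j : Fin d, y (g j) ^ (j.rev : ℕ)) * f := by
        simp [alternant, Matrix.det_apply, Finset.sum_mul]
    _ = ∑ g : Equiv.Perm (Fin d), ∑ i ∈ s,
          c i * Equiv.Perm.sign g • ∏ j : Fin d, y (g j) ^ (m i j + (j.rev : ℕ)) := by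
        refine Finset.sum_congr rfl fun g _ => ?_
        conv_lhs => rw [hf g]
        rw [Finset.mul_sum]
        refine Finset.sum_congr rfl fun i _ => ?_
        simp only [pow_add, Finset.prod_mul_distrib, smul_mul_assoc, mul_smul_comm]
        congr 1
        ring
    _ = ∑ i ∈ s, c i * alternant y (m i) := by
        rw [Finset.sum_comm]
        simp [alternant, Matrix.det_apply, Finset.mul_sum]
    _ = alternant y 0 * ∑ i ∈ s, c i * jacobiTrudi (hsymmVal y) (m i) := by
        rw [Finset.mul_sum]
        refine Finset.sum_congr rfl fun i _ => ?_
        rw [alternant_eq_mul_jacobiTrudi, mul_left_comm]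

end Bialternant

section Straightening

variable {d k : ℕ}

lemma val_le_val_apply (u : Fin d ↪o Fin k) (i : Fin d) : (i : ℕ) ≤ u i := by
  simpa using Finset.card_le_card_of_injOn (s := Finset.Iio i) (t := Finset.Iio (u i)) u
    (fun a ha => by simpa using ha) u.injective.injOn

lemma val_apply_add_le (u : Fin d ↪o Fin k) (i : Fin d) : (u i : ℕ) + d ≤ k + i := by
  have hcard := Finset.card_le_card_of_injOn (s := Finset.Ioi i) (t := Finset.Ioi (u i)) u
    (fun a ha => by simpa using ha) u.injective.injOn
  simp only [Fin.card_Ioi] at hcard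
  omega

lemma val_apply_add_le_val_apply_add (u : Fin d ↪o Fin k) {i j : Fin d} (hij : i ≤ j) :
    (u i : ℕ) + j ≤ u j + i := by
  have hcard := Finset.card_le_card_of_injOn (s := Finset.Ico i j) (t := Finset.Ico (u i) (u j)) u
    (fun a ha => by simpa using ha) u.injective.injOn
  simp only [Fin.card_Ico] at hcard
  have : u i ≤ u j := u.monotone hij
  omega

/-- The partition inside the `d × (k - d)` box whose `i`-th part is `(k - d) + i - uᵢ`. Every such
partition arises from a unique strictly increasing `u`. -/
def boxPartition (u : Fin d ↪o Fin k) (i : Fin d) : ℕ :=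
  k - d + i - u i

lemma boxPartition_le (u : Fin d ↪o Fin k) (i : Fin d) : boxPartition u i ≤ k - d := by
  have := val_le_val_apply u i
  unfold boxPartition
  omega

lemma antitone_boxPartition (u : Fin d ↪o Fin k) : Antitone (boxPartition u) := by
  intro i j hij
  have := val_apply_add_le_val_apply_add u hij
  unfold boxPartition
  omega

lemma cast_boxPartition_sub (u : Fin d ↪o Fin k) (i : Fin d) :
    (boxPartition u i : ℤ) - (i : ℕ) = (k : ℤ) - d - (u i : ℕ) := by
  have := val_le_val_apply u i
  have := val_apply_add_le u i
  unfold boxPartition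
  omega

lemma exists_boxPartition_eq (hdk : d ≤ k) {lam : Fin d → ℕ} (hanti : Antitone lam)
    (hle : ∀ i, lam i ≤ k - d) : ∃ u : Fin d ↪o Fin k, boxPartition u = lam := by
  refine ⟨OrderEmbedding.ofStrictMono (fun i => ⟨k - d + i - lam i, by omega⟩) fun i j hij => ?_,
    funext fun i => ?_⟩
  · have := hanti hij.le
    have := hle i
    simp only [Fin.mk_lt_mk]
    omega
  · have := hle i
    change k - d + i - (k - d + i - lam i) = lam i
    omega

variable {R Q : Type*} [CommRing R] [CommRing Q] [Algebra R Q]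

lemma det_comp_mem_span {ι : Type*} [LinearOrder ι] (v : ι → Fin d → Q) (r : Fin d → ι) :
    (Matrix.of fun i => v (r i)).det ∈ Submodule.span R
      (Set.range fun u : Fin d ↪o ι => (Matrix.of fun i => v (u i)).det) := by
  by_cases hr : Function.Injective r
  · have hsorted : StrictMono (r ∘ Tuple.sort r) :=
      (Tuple.monotone_sort r).strictMono_of_injective (hr.comp (Tuple.sort r).injective)
    have hperm := Matrix.det_permute (Tuple.sort r) (Matrix.of fun i => v (r i))
    have hmem : ((Matrix.of fun i => v (r i)).submatrix (Tuple.sort r) id).det ∈ Submodule.span R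
        (Set.range fun u : Fin d ↪o ι => (Matrix.of fun i => v (u i)).det) :=
      Submodule.subset_span ⟨OrderEmbedding.ofStrictMono _ hsorted, rfl⟩
    rw [hperm] at hmem
    rcases Int.units_eq_one_or (Equiv.Perm.sign (Tuple.sort r)) with hs | hs
    · simpa [hs] using hmem
    · simpa [hs] using hmem
  · obtain ⟨i, j, hij, hne⟩ := Function.not_injective_iff.1 hr
    rw [Matrix.det_zero_of_row_eq hne (congrArg v hij)]
    exact Submodule.zero_mem _

lemma det_mem_span_of_mem_span {ι : Type*} [Finite ι] [LinearOrder ι] {v : ι → Fin d → Q}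
    {M : Matrix (Fin d) (Fin d) Q} (hM : ∀ i, M i ∈ Submodule.span R (Set.range v)) :
    M.det ∈ Submodule.span R
      (Set.range fun u : Fin d ↪o ι => (Matrix.of fun i => v (u i)).det) := by
  have := Fintype.ofFinite ι
  choose c hc using fun i => (Submodule.mem_span_range_iff_exists_fun R).1 (hM i)
  let det : MultilinearMap R (fun _ : Fin d => Fin d → Q) Q :=
    Matrix.detRowAlternating.toMultilinearMap.restrictScalars R
  have hdet : M.det = det fun i => ∑ a, c i a • v a := congrArg Matrix.det (funext hc).symm
  rw [hdet, MultilinearMap.map_sum]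
  refine Submodule.sum_mem _ fun r _ => ?_
  rw [MultilinearMap.map_smul_univ]
  exact Submodule.smul_mem _ _ (det_comp_mem_span v r)

lemma eq_sum_smul_of_coeff_natSeries_mul_eq_zero {P : R[X]} (hP : P.natDegree ≤ k)
    (hP0 : P.coeff 0 = 1) {h : ℤ → Q} (hneg : ∀ z < 0, h z = 0) {r : ℕ}
    (hr : PowerSeries.coeff r (natSeries h * (P.map (algebraMap R Q) : Q⟦X⟧)) = 0) :
    h r = ∑ a : Fin k, (-P.coeff (a + 1)) • h (r - 1 - (a : ℕ)) := by
  rw [coeff_natSeries_mul_coe hneg (Nat.lt_succ_iff.2 (Polynomial.natDegree_map_le.trans hP)),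
    Finset.sum_range_succ', Finset.sum_range] at hr
  simp only [Polynomial.coeff_map, hP0, map_one, one_mul, Nat.cast_zero, sub_zero, Nat.cast_add,
    Nat.cast_one, add_comm _ (1 : ℤ), ← sub_sub, ← Algebra.smul_def] at hr
  simp only [neg_smul, Finset.sum_neg_distrib]
  exact eq_neg_of_add_eq_zero_right hr

lemma shift_mem_span_of_recurrence {h : ℤ → Q} (hneg : ∀ z < 0, h z = 0) (c : Fin k → R)
    (hrec : ∀ z, (k : ℤ) - d < z → h z = ∑ a, c a • h (z - 1 - (a : ℕ))) (z : ℤ) :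
    (fun j : Fin d => h (z + (j : ℕ))) ∈ Submodule.span R
      (Set.range fun (s : Fin k) (j : Fin d) => h ((k : ℤ) - d - (s : ℕ) + (j : ℕ))) := by
  suffices ∀ e : ℕ, ∀ z ≤ (k : ℤ) - d + e, (fun j : Fin d => h (z + (j : ℕ))) ∈ Submodule.span R
      (Set.range fun (s : Fin k) (j : Fin d) => h ((k : ℤ) - d - (s : ℕ) + (j : ℕ))) from
    this (z - (k - d)).toNat z (by omega)
  intro e
  induction e with
  | zero =>
    intro z hz
    by_cases hlow : z ≤ -d
    · convert Submodule.zero_mem _ with j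
      exact hneg _ (by omega)
    · refine Submodule.subset_span
        ⟨⟨((k : ℤ) - d - z).toNat, by omega⟩, funext fun j => congrArg h ?_⟩
      simp only
      omega
  | succ e ih =>
    intro z hz
    by_cases hze : z ≤ k - d + e
    · exact ih z hze
    · have hrow : (fun j : Fin d => h (z + (j : ℕ))) =
          ∑ a, c a • fun j : Fin d => h (z - 1 - (a : ℕ) + (j : ℕ)) := by
        ext j
        rw [hrec _ (by omega), Finset.sum_apply]
        refine Finset.sum_congr rfl fun a _ => ?_
        rw [Pi.smul_apply]
        congr 2
        ring
      rw [hrow]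
      exact Submodule.sum_mem _ fun a _ => Submodule.smul_mem _ _ (ih _ (by omega))

lemma jacobiTrudi_mem_span_boxPartition (hdk : d ≤ k) {h : ℤ → Q} (hneg : ∀ z < 0, h z = 0)
    (t : Fin k → R)
    (hrel : ∀ r, k - d < r → esymmConv (algebraMap R Q ∘ t) h r = 0)
    (m : Fin d → ℕ) :
    jacobiTrudi h m ∈ Submodule.span R
      (Set.range fun u : Fin d ↪o Fin k => jacobiTrudi h (boxPartition u)) := by
  have hmap : (reciprocalPoly t).map (algebraMap R Q) = reciprocalPoly (algebraMap R Q ∘ t) := by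
    simp [reciprocalPoly, Polynomial.map_prod]
  have hrec (z : ℤ) (hz : (k : ℤ) - d < z) :
      h z = ∑ a : Fin k, (-(reciprocalPoly t).coeff (a + 1)) • h (z - 1 - (a : ℕ)) := by
    lift z to ℕ using by omega
    refine eq_sum_smul_of_coeff_natSeries_mul_eq_zero
      (by simpa using natDegree_reciprocalPoly_le t) (by simp [coeff_reciprocalPoly]) hneg ?_
    have hz' := hrel z (by omega)
    rwa [esymmConv_eq_coeff, ← hmap,
      (isUnit_one.neg.pow z).mul_right_eq_zero] at hz'
  simp only [jacobiTrudi, cast_boxPartition_sub]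
  exact det_mem_span_of_mem_span (v := fun (s : Fin k) (j : Fin d) => h ((k : ℤ) - d - s + j))
    fun i => shift_mem_span_of_recurrence hneg _ hrec _

end Straightening

section PartialSubstaircases

variable {n d e : ℕ}

/-- A word with letters `< d` is `e`-partially substaircase if it lies below `0, 1, …, e - 1` at
some `e` increasing positions; for `e = d ≥ 1` these are the `(n, d)`-substaircase sequences. -/
def IsPartialSubstaircase (d e : ℕ) (a : Fin n → ℕ) : Prop :=
  (∀ j, a j < d) ∧ ∃ φ : Fin e ↪o Fin n, ∀ t, a (φ t) ≤ t

lemma isSubstaircase_iff_isPartialSubstaircase (hd : 1 ≤ d) {a : Fin n → ℕ} :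
    IsSubstaircase n d a ↔ IsPartialSubstaircase d d a := by
  constructor
  · rintro ⟨s, ⟨φ, hφ, hs, hs'⟩, ha⟩
    refine ⟨fun j => (ha j).trans_lt ?_, OrderEmbedding.ofStrictMono φ hφ, fun t => hs t ▸ ha (φ t)⟩
    by_cases hj : ∃ t, j = φ t
    · obtain ⟨t, rfl⟩ := hj
      exact hs t ▸ t.isLt
    · rw [hs' j (not_exists.1 hj)]
      omega
  · rintro ⟨had, φ, hφ⟩
    refine ⟨Function.extend φ (fun t => (t : ℕ)) fun _ => d - 1,
      ⟨φ, φ.strictMono, φ.injective.extend_apply _ _, fun j hj =>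
        Function.extend_apply' _ _ _ fun ⟨t, ht⟩ => hj t ht.symm⟩, fun j => ?_⟩
    by_cases hj : ∃ t, φ t = j
    · obtain ⟨t, rfl⟩ := hj
      rw [φ.injective.extend_apply]
      exact hφ t
    · rw [Function.extend_apply' _ _ _ hj]
      exact Nat.le_sub_one_of_lt (had j)

lemma IsPartialSubstaircase.anti {e' : ℕ} {a : Fin n → ℕ} (ha : IsPartialSubstaircase d e a)
    (he : e' ≤ e) : IsPartialSubstaircase d e' a :=
  let ⟨had, φ, hφ⟩ := ha
  ⟨had, (Fin.castLEOrderEmb he).trans φ, fun t => hφ (Fin.castLE he t)⟩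

lemma isPartialSubstaircase_fin_zero (d : ℕ) {a : Fin 0 → ℕ} :
    IsPartialSubstaircase d e a ↔ e = 0 := by
  refine ⟨fun ⟨_, φ, _⟩ => ?_, ?_⟩
  · simpa using Fintype.card_le_of_embedding φ.toEmbedding
  · rintro rfl
    exact ⟨fun j => j.elim0, OrderEmbedding.ofIsEmpty, fun t => t.elim0⟩

lemma isPartialSubstaircase_snoc_of_le {b : Fin n → ℕ} {c : ℕ} (hc : e ≤ c) :
    IsPartialSubstaircase d e (Fin.snoc b c : Fin (n + 1) → ℕ) ↔
      c < d ∧ IsPartialSubstaircase d e b := by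
  constructor
  · rintro ⟨had, φ, hφ⟩
    have hlast (t : Fin e) : φ t ≠ Fin.last n := fun ht => by
      have := hφ t
      rw [ht, Fin.snoc_last] at this
      omega
    refine ⟨by simpa using had (Fin.last n), fun j => by simpa using had j.castSucc,
      OrderEmbedding.ofStrictMono (fun t => (φ t).castPred (hlast t)) fun s t hst => ?_,
      fun t => ?_⟩
    · exact Fin.castPred_lt_castPred_iff.2 (φ.strictMono hst)
    · have := hφ t
      rwa [← Fin.castSucc_castPred _ (hlast t), Fin.snoc_castSucc] at this
  · rintro ⟨hcd, hbd, φ, hφ⟩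
    refine ⟨Fin.lastCases (by simpa using hcd) fun j => by simpa using hbd j,
      φ.trans Fin.castSuccOrderEmb, fun t => by simpa using hφ t⟩

lemma isPartialSubstaircase_succ_snoc_of_le {b : Fin n → ℕ} {c : ℕ} (hc : c ≤ e) :
    IsPartialSubstaircase d (e + 1) (Fin.snoc b c : Fin (n + 1) → ℕ) ↔
      c < d ∧ IsPartialSubstaircase d e b := by
  constructor
  · rintro ⟨had, φ, hφ⟩
    have hlast (t : Fin e) : φ t.castSucc ≠ Fin.last n :=
      ((φ.strictMono (Fin.castSucc_lt_last t)).trans_le (Fin.le_last _)).ne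
    refine ⟨by simpa using had (Fin.last n), fun j => by simpa using had j.castSucc,
      OrderEmbedding.ofStrictMono (fun t => (φ t.castSucc).castPred (hlast t)) fun s t hst => ?_,
      fun t => ?_⟩
    · exact Fin.castPred_lt_castPred_iff.2 (φ.strictMono hst)
    · have := hφ t.castSucc
      rwa [← Fin.castSucc_castPred _ (hlast t), Fin.snoc_castSucc] at this
  · rintro ⟨hcd, hbd, φ, hφ⟩
    have hψ : StrictMono
        (Fin.snoc (fun t => (φ t).castSucc) (Fin.last n) : Fin (e + 1) → Fin (n + 1)) := by
      intro s t hst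
      obtain ⟨s, rfl⟩ := Fin.exists_castSucc_eq.2 (hst.trans_le (Fin.le_last t)).ne
      induction t using Fin.lastCases with
      | last => simp
      | cast t => simpa using hst
    exact ⟨Fin.lastCases (by simpa using hcd) fun j => by simpa using hbd j,
      OrderEmbedding.ofStrictMono _ hψ,
      Fin.lastCases (by simpa using hc) fun t => by simpa using hφ t⟩

end PartialSubstaircases

section SpanningMonomials

variable {n d : ℕ} {L Q : Type*} [CommRing L] [CommRing Q] [Algebra L Q]

/-- The monomials `∏ xᵢ ^ aᵢ` whose exponent word is `e`-partially substaircase. -/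
def substaircaseMonomials (d e : ℕ) (x : Fin n → Q) : Set Q :=
  {q | ∃ a, IsPartialSubstaircase d e a ∧ q = ∏ i, x i ^ a i}

lemma substaircaseMonomials_anti (d : ℕ) (x : Fin n → Q) : Antitone fun e =>
    substaircaseMonomials d e x := by
  rintro e e' he _ ⟨a, ha, rfl⟩
  exact ⟨a, ha.anti he, rfl⟩

lemma prod_pow_snoc (x : Fin (n + 1) → Q) (b : Fin n → ℕ) (c : ℕ) :
    ∏ i, x i ^ (Fin.snoc b c : Fin (n + 1) → ℕ) i =
      x (Fin.last n) ^ c * ∏ i : Fin n, x i.castSucc ^ b i := by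
  simp only [Fin.prod_univ_castSucc, Fin.snoc_castSucc, Fin.snoc_last]
  exact mul_comm _ _

lemma pow_last_mul_mem_of_le {e c : ℕ} (hec : e ≤ c) (hcd : c < d) (x : Fin (n + 1) → Q) {q : Q}
    (hq : q ∈ substaircaseMonomials d e fun i : Fin n => x i.castSucc) :
    x (Fin.last n) ^ c * q ∈ substaircaseMonomials d e x := by
  obtain ⟨b, hb, rfl⟩ := hq
  exact ⟨_, (isPartialSubstaircase_snoc_of_le hec).2 ⟨hcd, hb⟩, (prod_pow_snoc x b c).symm⟩

lemma pow_last_mul_mem_succ {e c : ℕ} (hce : c ≤ e) (hcd : c < d) (x : Fin (n + 1) → Q) {q : Q}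
    (hq : q ∈ substaircaseMonomials d e fun i : Fin n => x i.castSucc) :
    x (Fin.last n) ^ c * q ∈ substaircaseMonomials d (e + 1) x := by
  obtain ⟨b, hb, rfl⟩ := hq
  exact ⟨_, (isPartialSubstaircase_succ_snoc_of_le hce).2 ⟨hcd, hb⟩, (prod_pow_snoc x b c).symm⟩

lemma pow_last_mul_mem {e c : ℕ} (hcd : c < d) (x : Fin (n + 1) → Q) {q : Q}
    (hq : q ∈ substaircaseMonomials d e fun i : Fin n => x i.castSucc) :
    x (Fin.last n) ^ c * q ∈ substaircaseMonomials d e x := by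
  obtain hec | hce := le_or_gt e c
  · exact pow_last_mul_mem_of_le hec hcd x hq
  · obtain ⟨e, rfl⟩ := Nat.exists_eq_add_one_of_ne_zero (Nat.ne_zero_of_lt hce)
    exact pow_last_mul_mem_succ (Nat.le_of_lt_succ hce) hcd x
      (substaircaseMonomials_anti d _ e.le_succ hq)

lemma image_substaircaseMonomials {F Q' : Type*} [CommRing Q'] [FunLike F Q Q']
    [RingHomClass F Q Q'] (π : F) (d e : ℕ) (x : Fin n → Q) :
    π '' substaircaseMonomials d e x = substaircaseMonomials d e fun i => π (x i) := by
  ext q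
  constructor
  · rintro ⟨_, ⟨a, ha, rfl⟩, rfl⟩
    exact ⟨a, ha, by simp only [map_prod, map_pow]⟩
  · rintro ⟨a, ha, rfl⟩
    exact ⟨_, ⟨a, ha, rfl⟩, by simp only [map_prod, map_pow]⟩

/-- The situation of the elements `xᵢ` in the quotient by `I_{n,k,d}` and in the subquotients met
when the `xᵢ` are removed one at a time: they generate `Q`, each is a root of `f * g`, and the
first factor `f` moreover divides `∏ᵢ (T - xᵢ)`. -/
structure IsFactoredRootSystem (f g : L[X]) (x : Fin n → Q) : Prop where
  monic_left : f.Monic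
  monic_right : g.Monic
  aeval_mul_eq_zero : ∀ i, Polynomial.aeval (x i) (f * g) = 0
  map_dvd_prod : f.map (algebraMap L Q) ∣ ∏ i, (Polynomial.X - Polynomial.C (x i))
  adjoin_range : Algebra.adjoin L (Set.range x) = ⊤

/-- The divided difference `(f(T) - f(X)) / (T - X)`, a polynomial in `T` over `L[X]`. -/
noncomputable def dividedDifference (f : L[X]) : L[X][X] :=
  (f.map Polynomial.C - Polynomial.C f) /ₘ (Polynomial.X - Polynomial.C Polynomial.X)

lemma X_sub_C_mul_dividedDifference (f : L[X]) :
    (Polynomial.X - Polynomial.C Polynomial.X) * dividedDifference f =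
      f.map Polynomial.C - Polynomial.C f := by
  rw [dividedDifference, Polynomial.mul_divByMonic_eq_iff_isRoot, Polynomial.IsRoot,
    Polynomial.eval_sub, Polynomial.eval_map, Polynomial.eval₂_C_X, Polynomial.eval_C, sub_self]

lemma natDegree_map_C_sub_C (f : L[X]) :
    (f.map Polynomial.C - Polynomial.C f).natDegree = f.natDegree := by
  rw [Polynomial.natDegree_sub_C, Polynomial.natDegree_map_eq_of_injective Polynomial.C_injective]

lemma natDegree_dividedDifference [Nontrivial L] (f : L[X]) :
    (dividedDifference f).natDegree = f.natDegree - 1 := by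
  rw [dividedDifference, Polynomial.natDegree_divByMonic _ (Polynomial.monic_X_sub_C _),
    natDegree_map_C_sub_C, Polynomial.natDegree_X_sub_C]

lemma monic_dividedDifference {f : L[X]} (hf : f.Monic) (hdeg : 0 < f.natDegree) :
    (dividedDifference f).Monic := by
  refine (Polynomial.monic_X_sub_C (Polynomial.X : L[X])).of_mul_monic_left ?_
  rw [X_sub_C_mul_dividedDifference]
  refine (hf.map _).sub_of_left (Polynomial.degree_C_le.trans_lt ?_)
  rwa [Polynomial.degree_map_eq_of_injective Polynomial.C_injective,
    ← Polynomial.natDegree_pos_iff_degree_pos]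

lemma dvd_of_X_sub_C_mul_dvd {a : Q} {p q : Q[X]}
    (h : (Polynomial.X - Polynomial.C a) * p ∣ (Polynomial.X - Polynomial.C a) * q) : p ∣ q := by
  obtain ⟨r, hr⟩ := h
  exact ⟨r, (Polynomial.monic_X_sub_C a).isRegular.left (hr.trans (mul_assoc _ _ _))⟩

lemma map_prod_X_sub_C {Q' : Type*} [CommRing Q'] (π : Q →+* Q') (x : Fin (n + 1) → Q) :
    (∏ i, (Polynomial.X - Polynomial.C (x i))).map π =
      (Polynomial.X - Polynomial.C (π (x (Fin.last n)))) *
        ∏ i : Fin n, (Polynomial.X - Polynomial.C (π (x i.castSucc))) := by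
  rw [mul_comm, Polynomial.map_prod, Fin.prod_univ_castSucc]
  simp only [Polynomial.map_sub, Polynomial.map_X, Polynomial.map_C]

lemma natDegree_X_sub_C_mul_map_C [Nontrivial L] {g : L[X]} (hg : g.Monic) :
    ((Polynomial.X - Polynomial.C Polynomial.X) * g.map Polynomial.C).natDegree =
      1 + g.natDegree := by
  rw [(Polynomial.monic_X_sub_C _).natDegree_mul (hg.map _), Polynomial.natDegree_X_sub_C,
    hg.natDegree_map]

section Tower

variable [Algebra L[X] Q] [IsScalarTower L L[X] Q]

lemma smul_mem_of_pow_mul_mem {T : Submodule L Q} {q : Q} {N : ℕ} {r : L[X]}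
    (hr : r.degree < N)
    (hT : ∀ c < N, algebraMap L[X] Q Polynomial.X ^ c * q ∈ T) : r • q ∈ T := by
  classical
  have hspan := Polynomial.mem_degreeLT.2 hr
  rw [Polynomial.degreeLT_eq_span_X_pow] at hspan
  clear hr
  induction hspan using Submodule.span_induction with
  | mem p hp =>
    obtain ⟨c, hc, rfl⟩ := Finset.mem_image.1 hp
    simpa [Algebra.smul_def] using hT c (Finset.mem_range.1 hc)
  | zero => simp
  | add p p' _ _ hp hp' => exact add_smul p p' q ▸ T.add_mem hp hp'
  | smul a p _ hp => exact smul_assoc a p q ▸ T.smul_mem a hp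

variable {Q' : Type*} [CommRing Q'] [Algebra L[X] Q'] (π : Q →ₐ[L[X]] Q')

lemma exists_mem_map_eq_of_span_eq_top [Nontrivial L] {s : Set Q}
    (hs : Submodule.span L[X] (π '' s) = ⊤) {p : L[X]} (hp : p.Monic)
    (hpπ : algebraMap L[X] Q' p = 0) {T : Submodule L Q}
    (hT : ∀ c < p.natDegree, ∀ b ∈ s, algebraMap L[X] Q Polynomial.X ^ c * b ∈ T) (q' : Q') :
    ∃ q ∈ T, π q = q' := by
  obtain ⟨l, hl, rfl⟩ := (Finsupp.mem_span_image_iff_linearCombination L[X]).1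
    (hs ▸ Submodule.mem_top : q' ∈ _)
  refine ⟨l.sum fun b r => (r %ₘ p) • b, Submodule.sum_mem _ fun b hb =>
    smul_mem_of_pow_mul_mem ?_ fun c hc => hT c hc b (hl hb), ?_⟩
  · rw [← Polynomial.degree_eq_natDegree hp.ne_zero]
    exact Polynomial.degree_modByMonic_lt _ hp
  · rw [Finsupp.linearCombination_apply, Finsupp.sum, Finsupp.sum, map_sum]
    refine Finset.sum_congr rfl fun b _ => ?_
    -- Coefficients only matter modulo `p`, which acts as zero on the target of `π`.
    have hmod : algebraMap L[X] Q' (l b %ₘ p) = algebraMap L[X] Q' (l b) := by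
      conv_rhs => rw [← Polynomial.modByMonic_add_div (l b) p, map_add, map_mul, hpπ, zero_mul,
        add_zero]
    rw [map_smul, Algebra.smul_def, hmod, ← Algebra.smul_def]

variable {x : Fin (n + 1) → Q} {π}

lemma adjoin_range_map_castSucc_eq_top (hπ : Function.Surjective π)
    (hx : algebraMap L[X] Q Polynomial.X = x (Fin.last n))
    (hadj : Algebra.adjoin L (Set.range x) = ⊤) :
    Algebra.adjoin L[X] (Set.range fun i : Fin n => π (x i.castSucc)) = ⊤ := by
  have hle : Algebra.adjoin L (Set.range x) ≤
      (Algebra.adjoin L[X] (Set.range fun i : Fin n => x i.castSucc)).restrictScalars L := by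
    refine Algebra.adjoin_le ?_
    rintro _ ⟨i, rfl⟩
    rw [SetLike.mem_coe, Subalgebra.mem_restrictScalars]
    induction i using Fin.lastCases with
    | last => exact hx ▸ Subalgebra.algebraMap_mem _ Polynomial.X
    | cast i => exact Algebra.subset_adjoin ⟨i, rfl⟩
  have hQ : Algebra.adjoin L[X] (Set.range fun i : Fin n => x i.castSucc) = ⊤ :=
    Algebra.eq_top_iff.2 fun q => (Subalgebra.mem_restrictScalars L).1
      (hle (hadj ▸ Algebra.mem_top))
  have hmap := congrArg (Subalgebra.map π) hQ
  rwa [AlgHom.map_adjoin, ← Set.range_comp, Algebra.map_top,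
    (AlgHom.range_eq_top π).2 hπ] at hmap

lemma map_map_algebraMap (f : L[X]) :
    (f.map (algebraMap L Q)).map (π : Q →+* Q') =
      (f.map Polynomial.C).map (algebraMap L[X] Q') := by
  rw [Polynomial.map_map, Polynomial.map_map, ← Polynomial.algebraMap_eq,
    IsScalarTower.algebraMap_eq L L[X] Q, ← RingHom.comp_assoc]
  exact congrArg (fun φ => f.map (RingHom.comp φ _)) π.comp_algebraMap

variable {f g : L[X]}

lemma exists_mem_span_map_eq [Nontrivial L] (hf : f.Monic)
    (hdeg : 0 < f.natDegree) (hx : algebraMap L[X] Q Polynomial.X = x (Fin.last n))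
    (hfπ : algebraMap L[X] Q' f = 0)
    (hspan : Submodule.span L[X]
      (substaircaseMonomials d (f.natDegree - 1) fun i : Fin n => π (x i.castSucc)) = ⊤)
    (hfd : f.natDegree ≤ d) (q' : Q') :
    ∃ q ∈ Submodule.span L (substaircaseMonomials d f.natDegree x), π q = q' := by
  refine exists_mem_map_eq_of_span_eq_top π (by rwa [image_substaircaseMonomials]) hf hfπ
    (fun c hc b hb => Submodule.subset_span ?_) q'
  have := pow_last_mul_mem_succ (Nat.le_sub_one_of_lt hc) (hc.trans_le hfd) x hb
  rwa [hx, ← Nat.sub_add_cancel hdeg]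

lemma exists_mul_mem_span_map_eq [Nontrivial L] (hf : f.Monic) (hg : g.Monic)
    (hx : algebraMap L[X] Q Polynomial.X = x (Fin.last n)) (hgπ : algebraMap L[X] Q' g = 0)
    (hspan : Submodule.span L[X] (substaircaseMonomials (f.natDegree + g.natDegree) f.natDegree
      fun i : Fin n => π (x i.castSucc)) = ⊤) (q' : Q') :
    ∃ q, algebraMap L[X] Q f * q ∈ Submodule.span L
      (substaircaseMonomials (f.natDegree + g.natDegree) f.natDegree x) ∧ π q = q' := by
  refine exists_mem_map_eq_of_span_eq_top π (by rwa [image_substaircaseMonomials]) hg hgπ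
    (T := (Submodule.span L _).comap (LinearMap.mulLeft L (algebraMap L[X] Q f)))
    (fun c hc b hb => ?_) q'
  rw [Submodule.mem_comap, LinearMap.mulLeft_apply, ← mul_assoc, ← map_pow, ← map_mul,
    ← Algebra.smul_def]
  refine smul_mem_of_pow_mul_mem (N := f.natDegree + g.natDegree) ?_ fun c' hc' => ?_
  · rw [mul_comm, hf.degree_mul, Polynomial.degree_X_pow,
      Polynomial.degree_eq_natDegree hf.ne_zero, add_comm]
    exact_mod_cast Nat.add_lt_add_left hc _
  · exact hx ▸ Submodule.subset_span (pow_last_mul_mem hc' x hb)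

lemma span_eq_top_of_span_eq_top [Nontrivial L] (hf : f.Monic) (hg : g.Monic)
    (hx : algebraMap L[X] Q Polynomial.X = x (Fin.last n))
    (hfg : algebraMap L[X] Q f * algebraMap L[X] Q g = 0)
    (hleft : 0 < f.natDegree → Submodule.span L[X]
      (substaircaseMonomials (f.natDegree + g.natDegree) (f.natDegree - 1) fun i : Fin n =>
        Ideal.Quotient.mkₐ L[X] (Ideal.span {algebraMap L[X] Q f}) (x i.castSucc)) = ⊤)
    (hright : Submodule.span L[X]
      (substaircaseMonomials (f.natDegree + g.natDegree) f.natDegree fun i : Fin n =>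
        Ideal.Quotient.mkₐ L[X] (Ideal.span {algebraMap L[X] Q f}).annihilator
          (x i.castSucc)) = ⊤) :
    Submodule.span L
      (substaircaseMonomials (f.natDegree + g.natDegree) f.natDegree x) = ⊤ := by
  set s := Submodule.span L (substaircaseMonomials (f.natDegree + g.natDegree) f.natDegree x)
  have hmod (q : Q) : ∃ q₁ ∈ s, ∃ q₂, q = q₁ + algebraMap L[X] Q f * q₂ := by
    obtain hdeg | hdeg := Nat.eq_zero_or_pos f.natDegree
    · rw [hf.natDegree_eq_zero.1 hdeg]
      exact ⟨0, s.zero_mem, q, by simp⟩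
    · obtain ⟨q₁, hq₁, hq⟩ := exists_mem_span_map_eq
        (π := Ideal.Quotient.mkₐ L[X] (Ideal.span {algebraMap L[X] Q f})) hf hdeg hx
        (Ideal.Quotient.eq_zero_iff_mem.2 (Ideal.mem_span_singleton_self _)) (hleft hdeg)
        (Nat.le_add_right _ _) (Ideal.Quotient.mk _ q)
      obtain ⟨q₂, hq₂⟩ := Ideal.mem_span_singleton'.1 (Ideal.Quotient.eq.1 hq.symm)
      exact ⟨q₁, hq₁, q₂, by rw [mul_comm, hq₂, add_sub_cancel]⟩
  have hmul (q : Q) : algebraMap L[X] Q f * q ∈ s := by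
    obtain ⟨q', hq', hq⟩ := exists_mul_mem_span_map_eq
      (π := Ideal.Quotient.mkₐ L[X] (Ideal.span {algebraMap L[X] Q f}).annihilator) hf hg hx
      (Ideal.Quotient.eq_zero_iff_mem.2 ((Submodule.mem_annihilator_span_singleton _ _).2
        ((mul_comm _ _).trans hfg))) hright (Ideal.Quotient.mk _ q)
    have hzero := (Submodule.mem_annihilator_span_singleton _ _).1 (Ideal.Quotient.eq.1 hq.symm)
    rw [smul_eq_mul, mul_comm, mul_sub, sub_eq_zero] at hzero
    rwa [hzero]
  refine Submodule.eq_top_iff'.2 fun q => ?_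
  obtain ⟨q₁, hq₁, q₂, rfl⟩ := hmod q
  exact s.add_mem hq₁ (hmul q₂)

variable [Algebra L Q'] [IsScalarTower L L[X] Q']

lemma IsFactoredRootSystem.aeval_map_C_mul_map_C
    (h : IsFactoredRootSystem f g x) (i : Fin (n + 1)) :
    Polynomial.aeval (π (x i)) (f.map Polynomial.C * g.map Polynomial.C) = 0 := by
  rw [← Polynomial.map_mul, ← Polynomial.algebraMap_eq, Polynomial.aeval_map_algebraMap]
  have := congrArg π (h.aeval_mul_eq_zero i)
  rwa [map_zero, ← AlgHom.restrictScalars_apply L π, ← Polynomial.aeval_algHom_apply] at this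

-- On `Q'` we have `(T - x_last) * dividedDifference f = f`, and `T - x_last` can be cancelled.
lemma IsFactoredRootSystem.dividedDifference_left (h : IsFactoredRootSystem f g x)
    (hdeg : 0 < f.natDegree) (hπ : Function.Surjective π)
    (hx : algebraMap L[X] Q Polynomial.X = x (Fin.last n)) (hf : algebraMap L[X] Q' f = 0) :
    IsFactoredRootSystem (dividedDifference f)
      ((Polynomial.X - Polynomial.C Polynomial.X) * g.map Polynomial.C)
      fun i : Fin n => π (x i.castSucc) where
  monic_left := monic_dividedDifference h.monic_left hdeg
  monic_right := (Polynomial.monic_X_sub_C _).mul (h.monic_right.map _)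
  aeval_mul_eq_zero i := by
    rw [mul_left_comm, ← mul_assoc, X_sub_C_mul_dividedDifference, sub_mul, map_sub,
      h.aeval_map_C_mul_map_C, map_mul, Polynomial.aeval_C, hf, zero_mul, sub_zero]
  map_dvd_prod := by
    have hmap := congrArg (Polynomial.map (algebraMap L[X] Q')) (X_sub_C_mul_dividedDifference f)
    rw [Polynomial.map_mul, Polynomial.map_sub, Polynomial.map_sub, Polynomial.map_X,
      Polynomial.map_C, Polynomial.map_C, hf, map_zero, sub_zero, ← π.commutes, hx,
      ← map_map_algebraMap (π := π)] at hmap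
    refine dvd_of_X_sub_C_mul_dvd (a := π (x (Fin.last n))) ?_
    rw [hmap]
    exact map_prod_X_sub_C (π : Q →+* Q') x ▸ Polynomial.map_dvd _ h.map_dvd_prod
  adjoin_range := adjoin_range_map_castSucc_eq_top hπ hx h.adjoin_range

-- If `∏ (T - xᵢ) = f * h`, then `f(x_last) h(x_last) = 0`, so `T - x_last` divides `h` over `Q'`.
lemma IsFactoredRootSystem.map_C (h : IsFactoredRootSystem f g x)
    (hπ : Function.Surjective π) (hx : algebraMap L[X] Q Polynomial.X = x (Fin.last n))
    (hf : ∀ q, algebraMap L[X] Q f * q = 0 → π q = 0) :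
    IsFactoredRootSystem (f.map Polynomial.C) (g.map Polynomial.C)
      fun i : Fin n => π (x i.castSucc) where
  monic_left := h.monic_left.map _
  monic_right := h.monic_right.map _
  aeval_mul_eq_zero i := h.aeval_map_C_mul_map_C i.castSucc
  map_dvd_prod := by
    obtain ⟨p, hp⟩ := h.map_dvd_prod
    have heval := congrArg (Polynomial.eval (x (Fin.last n))) hp
    rw [Polynomial.eval_prod, Finset.prod_eq_zero (Finset.mem_univ (Fin.last n)) (by simp),
      Polynomial.eval_mul, Polynomial.eval_map_algebraMap, ← hx,
      Polynomial.aeval_algebraMap_apply, Polynomial.aeval_X_left_apply, hx] at heval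
    have hroot : (p.map (π : Q →+* Q')).IsRoot (π (x (Fin.last n))) := by
      rw [Polynomial.IsRoot, Polynomial.eval_map, ← RingHom.coe_coe, Polynomial.eval₂_hom]
      exact hf _ heval.symm
    obtain ⟨p', hp'⟩ := Polynomial.dvd_iff_isRoot.2 hroot
    have hmap := (map_prod_X_sub_C (π : Q →+* Q') x).symm.trans (congrArg _ hp)
    rw [Polynomial.map_mul, hp', map_map_algebraMap, mul_left_comm, ← mul_assoc] at hmap
    exact dvd_of_X_sub_C_mul_dvd ⟨p', hmap⟩
  adjoin_range := adjoin_range_map_castSucc_eq_top hπ hx h.adjoin_range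

end Tower

lemma IsFactoredRootSystem.natDegree_eq_zero [Nontrivial Q] {f g : L[X]} {x : Fin 0 → Q}
    (h : IsFactoredRootSystem f g x) : f.natDegree = 0 := by
  have hunit : IsUnit (f.map (algebraMap L Q)) := isUnit_of_dvd_one (by simpa using h.map_dvd_prod)
  rw [← h.monic_left.natDegree_map (algebraMap L Q), (h.monic_left.map _).isUnit_iff.1 hunit,
    Polynomial.natDegree_one]

end SpanningMonomials

-- With `z = x_last`, the monomials span modulo `f(z)` by the first induction step, and the
-- multiples of `f(z)` are reached from the quotient by the annihilator of `f(z)`.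
theorem IsFactoredRootSystem.span_substaircaseMonomials_eq_top {n : ℕ} {L : Type*} {Q : Type*}
    [CommRing L] [CommRing Q] [Algebra L Q] {f g : L[X]} {x : Fin n → Q}
    (h : IsFactoredRootSystem f g x) :
    Submodule.span L
      (substaircaseMonomials (f.natDegree + g.natDegree) f.natDegree x) = ⊤ := by
  induction n generalizing L Q with
  | zero =>
    obtain _ | _ := subsingleton_or_nontrivial Q
    · exact Subsingleton.elim _ _
    refine Submodule.eq_top_iff'.2 fun q => ?_
    have hq : q ∈ Algebra.adjoin L (Set.range x) := h.adjoin_range ▸ Algebra.mem_top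
    rw [Set.range_eq_empty, Algebra.adjoin_empty] at hq
    obtain ⟨c, rfl⟩ := Algebra.mem_bot.1 hq
    rw [Algebra.algebraMap_eq_smul_one]
    refine Submodule.smul_mem _ c (Submodule.subset_span ⟨0, ?_, by simp⟩)
    rw [isPartialSubstaircase_fin_zero, h.natDegree_eq_zero]
  | succ n ih =>
    obtain _ | _ := subsingleton_or_nontrivial Q
    · exact Subsingleton.elim _ _
    have := (algebraMap L Q).domain_nontrivial
    let : Algebra L[X] Q := (Polynomial.aeval (x (Fin.last n)) : L[X] →ₐ[L] Q).toAlgebra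
    have : IsScalarTower L L[X] Q :=
      .of_algebraMap_eq' (Polynomial.aeval (x (Fin.last n)) : L[X] →ₐ[L] Q).comp_algebraMap.symm
    have hx : algebraMap L[X] Q Polynomial.X = x (Fin.last n) := Polynomial.aeval_X _
    have hfg : algebraMap L[X] Q f * algebraMap L[X] Q g = 0 := by
      rw [← map_mul]
      exact h.aeval_mul_eq_zero _
    refine span_eq_top_of_span_eq_top h.monic_left h.monic_right hx hfg (fun hdeg => ?_) ?_
    · have hspan := ih (h.dividedDifference_left (π := Ideal.Quotient.mkₐ L[X]
        (Ideal.span {algebraMap L[X] Q f})) hdeg (Ideal.Quotient.mkₐ_surjective _ _) hx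
        (Ideal.Quotient.eq_zero_iff_mem.2 (Ideal.mem_span_singleton_self _)))
      rwa [natDegree_dividedDifference, natDegree_X_sub_C_mul_map_C h.monic_right,
        ← add_assoc, Nat.sub_add_cancel hdeg] at hspan
    · have hspan := ih (h.map_C (π := Ideal.Quotient.mkₐ L[X]
        (Ideal.span {algebraMap L[X] Q f}).annihilator) (Ideal.Quotient.mkₐ_surjective _ _) hx
        fun q hq => Ideal.Quotient.eq_zero_iff_mem.2
          ((Submodule.mem_annihilator_span_singleton _ _).2 ((mul_comm _ _).trans hq)))
      rwa [Polynomial.natDegree_map_eq_of_injective Polynomial.C_injective,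
        Polynomial.natDegree_map_eq_of_injective Polynomial.C_injective] at hspan

section Counting

variable {n d : ℕ}

/-- The number of maps `Fin n → Fin d` whose range contains a given set of `e ≤ d` elements. -/
def coverCount (d : ℕ) : ℕ → ℕ → ℕ
  | 0, e => if e = 0 then 1 else 0
  | n + 1, e => e * coverCount d n (e - 1) + (d - e) * coverCount d n e

lemma natCard_subtype_eq_sum_snoc (P : (Fin (n + 1) → Fin d) → Prop) :
    Nat.card {a // P a} = ∑ c, Nat.card {a : Fin n → Fin d // P (Fin.snoc a c)} := by
  rw [← Nat.card_sigma]
  exact Nat.card_congr (((Fin.snocEquiv fun _ => Fin d).symm.subtypeEquiv fun a => by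
    simp).trans (Equiv.subtypeProdEquivSigmaSubtype fun c a => P (Fin.snoc a c)))

lemma sum_ite_mem_eq (U : Finset (Fin d)) (a b : ℕ) :
    ∑ c, (if c ∈ U then a else b) = U.card * a + (d - U.card) * b := by
  rw [Finset.sum_ite, Finset.sum_const, Finset.sum_const, Finset.filter_univ_mem,
    Finset.filter_not, Finset.filter_univ_mem, Finset.card_univ_sdiff, Fintype.card_fin,
    smul_eq_mul, smul_eq_mul]

lemma natCard_isPartialSubstaircase {e : ℕ} (he : e ≤ d) :
    Nat.card {a : Fin n → Fin d // IsPartialSubstaircase d e fun i => a i} =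
      coverCount d n e := by
  induction n generalizing e with
  | zero =>
    simp only [isPartialSubstaircase_fin_zero, coverCount]
    split_ifs with h <;> simp [h]
  | succ n ih =>
    have hcard (c : Fin d) : Nat.card {a : Fin n → Fin d // IsPartialSubstaircase d e fun i =>
        ((Fin.snoc a c : Fin (n + 1) → Fin d) i : ℕ)} =
          if c ∈ Finset.univ.filter (fun c : Fin d => (c : ℕ) < e) then coverCount d n (e - 1)
          else coverCount d n e := by
      have hsnoc (a : Fin n → Fin d) : (fun i => ((Fin.snoc a c : Fin (n + 1) → Fin d) i : ℕ)) =
          Fin.snoc (fun i => (a i : ℕ)) (c : ℕ) :=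
        Fin.comp_snoc Fin.val a c
      simp only [hsnoc, Finset.mem_filter_univ]
      split_ifs with hc
      · obtain ⟨e, rfl⟩ := Nat.exists_eq_add_one_of_ne_zero (Nat.ne_zero_of_lt hc)
        simp only [isPartialSubstaircase_succ_snoc_of_le (Nat.le_of_lt_succ hc), c.isLt, true_and]
        exact ih (Nat.le_of_succ_le he)
      · simp only [isPartialSubstaircase_snoc_of_le (not_lt.1 hc), c.isLt, true_and]
        exact ih he
    rw [natCard_subtype_eq_sum_snoc, Finset.sum_congr rfl fun c _ => hcard c, sum_ite_mem_eq,
      Fin.card_filter_val_lt, min_eq_right he, coverCount]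

lemma forall_mem_exists_snoc_eq_iff (U : Finset (Fin d)) (a : Fin n → Fin d) (c : Fin d) :
    (∀ u ∈ U, ∃ i, (Fin.snoc a c : Fin (n + 1) → Fin d) i = u) ↔
      ∀ u ∈ U.erase c, ∃ i, a i = u := by
  simp only [Fin.exists_fin_succ', Fin.snoc_castSucc, Fin.snoc_last, Finset.mem_erase, and_imp]
  grind

lemma natCard_forall_mem_exists_eq (U : Finset (Fin d)) :
    Nat.card {a : Fin n → Fin d // ∀ u ∈ U, ∃ i, a i = u} = coverCount d n U.card := by
  induction n generalizing U with
  | zero =>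
    simp only [IsEmpty.exists_iff, coverCount, Finset.card_eq_zero,
      Finset.eq_empty_iff_forall_notMem]
    split_ifs with h <;> simp [h]
  | succ n ih =>
    simp only [natCard_subtype_eq_sum_snoc, forall_mem_exists_snoc_eq_iff, ih,
      Finset.card_erase_eq_ite, coverCount, ← sum_ite_mem_eq, apply_ite (coverCount d n)]

lemma coverCount_succ_left {e : ℕ} (he : e ≤ d) :
    coverCount (d + 1) n e = coverCount (d + 1) n (e + 1) + coverCount d n e := by
  induction n generalizing e with
  | zero => simp [coverCount]
  | succ n ih =>
    obtain ⟨c, rfl⟩ := Nat.exists_eq_add_of_le he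
    have hsub : e + c + 1 - e = c + 1 := by omega
    have hsub' : e + c + 1 - (e + 1) = c := by omega
    simp only [coverCount, Nat.add_sub_cancel, Nat.add_sub_cancel_left, hsub, hsub']
    obtain rfl | e := e
    · linear_combination c * ih he
    · have hsub_one : e + 1 - 1 = e := rfl
      rw [hsub_one]
      linear_combination c * ih he + (e + 1) * ih (Nat.le_of_succ_le he)

lemma coverCount_self (n d : ℕ) : coverCount d n d = d.factorial * stirling2 n d := by
  induction n generalizing d with
  | zero => cases d <;> simp [coverCount, stirling2]
  | succ n ih =>
    cases d with
    | zero => simp [coverCount, stirling2]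
    | succ d =>
      simp only [coverCount, stirling2, Nat.add_sub_cancel, Nat.sub_self, zero_mul, add_zero]
      rw [coverCount_succ_left le_rfl, ih, ih, Nat.factorial_succ]
      ring

lemma natCard_surjective (n d : ℕ) :
    Nat.card {φ : Fin n → Fin d // Function.Surjective φ} = d.factorial * stirling2 n d := by
  rw [← coverCount_self]
  simpa only [Finset.mem_univ, forall_true_left, Finset.card_univ, Fintype.card_fin] using!
    natCard_forall_mem_exists_eq (n := n) (Finset.univ : Finset (Fin d))

end Counting

section InvariantRing

variable (n k d : ℕ)

/-- The ideal `I_{n,k,d}` of the invariant ring. -/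
noncomputable abbrev relationIdeal : Ideal (invZ3 n k d) :=
  Ideal.span (Subtype.val ⁻¹' Jtgens3Z n k d)

/-- The symmetric polynomials in `y_1, …, y_d` as elements of the invariant ring. -/
noncomputable def yHom : symmetricSubalgebra (Fin d) ℤ →ₐ[ℤ] invZ3 n k d :=
  ((rename (Sum.inr ∘ Sum.inl)).comp (symmetricSubalgebra (Fin d) ℤ).val).codRestrict _
    fun p g => by
      have hperm : permY3 n k d g ∘ Sum.inr ∘ Sum.inl = (Sum.inr ∘ Sum.inl) ∘ g := rfl
      rw [AlgHom.comp_apply, rename_rename, hperm, ← rename_rename]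
      exact congrArg _ (p.2 g)

/-- The variable `x_i` as an element of the invariant ring. -/
noncomputable def xInv (i : Fin n) : invZ3 n k d :=
  ⟨X (Sum.inl i), fun _ => rename_X _ _⟩

/-- The polynomial `h_z(y_1, …, y_d)` as an element of the invariant ring. -/
noncomputable def hInv (z : ℤ) : invZ3 n k d :=
  yHom n k d ⟨hsymmZidx (Fin d) ℤ z, by
    unfold hsymmZidx
    split_ifs
    · exact hsymm_isSymmetric _ _ _
    · exact IsSymmetric.zero⟩

/-- The polynomial `e_r(y_1, …, y_d)` as an element of the invariant ring. -/
noncomputable def eInv (r : ℕ) : invZ3 n k d :=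
  yHom n k d ⟨esymm (Fin d) ℤ r, esymm_isSymmetric _ _ _⟩

/-- The inclusion of the invariants that do not involve the variables `x_i`. -/
noncomputable def invZ3Inclusion : invZ3 0 k d →ₐ[MvPolynomial (Fin k) ℤ] invZ3 n k d :=
  AlgHom.mk ((((rename (Sum.map Fin.elim0 id)).comp (invZ3 0 k d).val).codRestrict (invZ3 n k d)
    fun p g => by
      have hperm : permY3 n k d g ∘ Sum.map Fin.elim0 id =
          Sum.map Fin.elim0 id ∘ permY3 0 k d g := by
        ext (i | i) <;> first | exact i.elim0 | rfl
      rw [AlgHom.comp_apply, rename_rename, hperm, ← rename_rename]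
      exact congrArg _ (p.2 g)).toRingHom) fun p => Subtype.ext (rename_rename _ _ _)

variable {n k d}

lemma coe_hInv (z : ℤ) : (hInv n k d z : MvPolynomial (Fin n ⊕ Fin d ⊕ Fin k) ℤ) =
    hsymmVal (X ∘ Sum.inr ∘ Sum.inl) z :=
  (aeval_X_left_apply _).symm.trans (aeval_rename _ _ _)

lemma hInv_of_neg {z : ℤ} (hz : z < 0) : hInv n k d z = 0 :=
  Subtype.ext ((coe_hInv z).trans (hsymmVal_of_neg _ hz))

lemma coe_jacobiTrudi_hInv (m : Fin d → ℕ) :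
    (↑(jacobiTrudi (hInv n k d) m) : MvPolynomial (Fin n ⊕ Fin d ⊕ Fin k) ℤ) =
      jacobiTrudi (hsymmVal (X ∘ Sum.inr ∘ Sum.inl)) m := by
  refine (map_jacobiTrudi (invZ3 n k d).val.toRingHom _ m).trans ?_
  exact congrArg (jacobiTrudi · m) (funext coe_hInv)

lemma coe_algebraMap_invZ3 (p : MvPolynomial (Fin k) ℤ) :
    (algebraMap _ (invZ3 n k d) p : MvPolynomial (Fin n ⊕ Fin d ⊕ Fin k) ℤ) =
      rename (Sum.inr ∘ Sum.inr) p :=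
  rfl

lemma invZ3Inclusion_yHom (p : symmetricSubalgebra (Fin d) ℤ) :
    invZ3Inclusion n k d (yHom 0 k d p) = yHom n k d p :=
  Subtype.ext (rename_rename _ _ _)

lemma invZ3Inclusion_jacobiTrudi (m : Fin d → ℕ) :
    invZ3Inclusion n k d (jacobiTrudi (hInv 0 k d) m) = jacobiTrudi (hInv n k d) m :=
  (map_jacobiTrudi (invZ3Inclusion n k d).toRingHom _ m).trans <|
    congrArg (jacobiTrudi · m) (funext fun _ => invZ3Inclusion_yHom _)

lemma rename_permY3_monomial (m : Fin n ⊕ Fin d ⊕ Fin k →₀ ℕ) (c : ℤ)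
    (g : Equiv.Perm (Fin d)) :
    rename (permY3 n k d g) (monomial m c) =
      (C c * (∏ i, X (Sum.inl i) ^ m (Sum.inl i)) *
          ∏ l, X (Sum.inr (Sum.inr l)) ^ m (Sum.inr (Sum.inr l))) *
        ∏ j, X (Sum.inr (Sum.inl (g j))) ^ m (Sum.inr (Sum.inl j)) := by
  rw [monomial_eq, Finsupp.prod_fintype _ _ (by simp)]
  simp only [Fintype.prod_sum_type, map_mul, map_prod, map_pow, rename_C, rename_X]
  simp only [permY3, Equiv.sumCongr_apply, Sum.map_inl, Sum.map_inr, Equiv.refl_apply]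
  ring

lemma eq_sum_smul_prod_pow_mul_jacobiTrudi (a : invZ3 n k d) :
    a = ∑ m ∈ a.1.support,
      (C (coeff m a.1) * ∏ l, X l ^ m (Sum.inr (Sum.inr l)) : MvPolynomial (Fin k) ℤ) •
        ((∏ i, xInv n k d i ^ m (Sum.inl i)) *
          jacobiTrudi (hInv n k d) fun j => m (Sum.inr (Sum.inl j))) := by
  have hy : Function.Injective (X ∘ Sum.inr ∘ Sum.inl :
      Fin d → MvPolynomial (Fin n ⊕ Fin d ⊕ Fin k) ℤ) :=
    (X_injective).comp (Sum.inr_injective.comp Sum.inl_injective)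
  have hsum := eq_sum_mul_jacobiTrudi_of_forall_perm hy a.1.support _ _ fun g =>
    calc a.1 = _ := (a.2 g).symm
      _ = _ := by
        conv_lhs => rw [a.1.as_sum, map_sum]
        exact Finset.sum_congr rfl fun m _ => rename_permY3_monomial m _ g
  refine Subtype.ext (hsum.trans ?_)
  rw [AddSubmonoidClass.coe_finsetSum]
  refine Finset.sum_congr rfl fun m _ => ?_
  rw [Algebra.smul_def, MulMemClass.coe_mul, MulMemClass.coe_mul, coe_jacobiTrudi_hInv,
    coe_algebraMap_invZ3, ← mul_assoc]
  congr 1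
  simp [xInv]
  ring

end InvariantRing

section Relations

variable {n k d : ℕ}

lemma intAeval_X_comp {σ τ : Type*} (f : σ → τ) (p : MvPolynomial σ ℤ) :
    aeval (X ∘ f : σ → MvPolynomial τ ℤ) p = rename f p :=
  (aeval_rename f X p).symm.trans (aeval_X_left_apply _)

lemma coe_hInv_natCast (r : ℕ) :
    (hInv n k d r : MvPolynomial (Fin n ⊕ Fin d ⊕ Fin k) ℤ) = hY3Z n k d r := by
  rw [coe_hInv, hsymmVal_natCast]
  exact intAeval_X_comp _ _

lemma coe_esymmConv_algebraMap (r : ℕ) :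
    (↑(esymmConv (algebraMap (MvPolynomial (Fin k) ℤ) (invZ3 n k d) ∘ X) (hInv n k d) r) :
      MvPolynomial (Fin n ⊕ Fin d ⊕ Fin k) ℤ) = genTY3Z n k d r := by
  have ht : (invZ3 n k d).val.toRingHom ∘ algebraMap (MvPolynomial (Fin k) ℤ) (invZ3 n k d) ∘ X =
      X ∘ Sum.inr ∘ Sum.inr := funext fun i => rename_X _ _
  refine (map_esymmConv (invZ3 n k d).val.toRingHom _ _ r).trans ?_
  rw [ht, esymmConv, genTY3Z]
  exact Finset.sum_congr rfl fun j _ =>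
    congrArg _ (congrArg₂ _ (intAeval_X_comp _ _) (coe_hInv_natCast j))

lemma coe_esymmConv_xInv (r : ℕ) :
    (↑(esymmConv (xInv n k d) (hInv n k d) r) : MvPolynomial (Fin n ⊕ Fin d ⊕ Fin k) ℤ) =
      genXY3Z n k d r := by
  refine (map_esymmConv (invZ3 n k d).val.toRingHom _ _ r).trans ?_
  exact Finset.sum_congr rfl fun j _ =>
    congrArg _ (congrArg₂ _ (intAeval_X_comp _ _) (coe_hInv_natCast j))

lemma coe_sum_xInv_pow_mul_eInv (i : Fin n) :
    (↑(∑ j ∈ Finset.range (d + 1), (-1) ^ j * (xInv n k d i ^ (d - j) * eInv n k d j)) :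
      MvPolynomial (Fin n ⊕ Fin d ⊕ Fin k) ℤ) = genPow3Z n k d i :=
  AddSubmonoidClass.coe_finsetSum _ _

lemma preimage_Jtgens3Z :
    (Subtype.val ⁻¹' Jtgens3Z n k d : Set (invZ3 n k d)) =
      {a | ∃ r, k - d < r ∧
        a = esymmConv (algebraMap (MvPolynomial (Fin k) ℤ) _ ∘ X) (hInv n k d) r} ∪
      {a | ∃ r, n - d < r ∧ a = esymmConv (xInv n k d) (hInv n k d) r} ∪
      {a | ∃ i, a = ∑ j ∈ Finset.range (d + 1),
        (-1) ^ j * (xInv n k d i ^ (d - j) * eInv n k d j)} := by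
  ext a
  simp only [Jtgens3Z, Set.mem_preimage, Set.mem_union, Set.mem_ofPred_eq,
    ← coe_esymmConv_algebraMap, ← coe_esymmConv_xInv, ← coe_sum_xInv_pow_mul_eInv,
    Subtype.coe_inj]

lemma relationIdeal_le_ker_iff {S : Type*} [CommRing S] [Algebra (MvPolynomial (Fin k) ℤ) S]
    (ρ : invZ3 n k d →ₐ[MvPolynomial (Fin k) ℤ] S) :
    relationIdeal n k d ≤ RingHom.ker ρ ↔
      (∀ r, k - d < r → esymmConv (algebraMap (MvPolynomial (Fin k) ℤ) S ∘ X)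
        (ρ ∘ hInv n k d) r = 0) ∧
      (∀ r, n - d < r → esymmConv (ρ ∘ xInv n k d) (ρ ∘ hInv n k d) r = 0) ∧
      ∀ i, ∑ j ∈ Finset.range (d + 1),
        (-1) ^ j * (ρ (xInv n k d i) ^ (d - j) * ρ (eInv n k d j)) = 0 := by
  have hρ : ρ ∘ algebraMap (MvPolynomial (Fin k) ℤ) (invZ3 n k d) ∘ X =
      algebraMap (MvPolynomial (Fin k) ℤ) S ∘ X := funext fun i => ρ.commutes _
  have hconv {τ : Type} [Fintype τ] (x : τ → invZ3 n k d) (r : ℕ) :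
      ρ (esymmConv x (hInv n k d) r) = esymmConv (ρ ∘ x) (ρ ∘ hInv n k d) r :=
    map_esymmConv ρ.toRingHom x _ r
  rw [Ideal.span_le, preimage_Jtgens3Z, Set.union_subset_iff, Set.union_subset_iff, and_assoc]
  simp only [Set.ofPred_subset, SetLike.mem_coe, RingHom.mem_ker, forall_exists_index, and_imp]
  refine and_congr (forall_comm.trans ?_) (and_congr (forall_comm.trans ?_) (forall_comm.trans ?_))
  · simp [hconv, hρ]
  · simp [hconv]
  · simp

end Relations

section YPolynomial

variable {n k d : ℕ}

variable (n k d) in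
/-- The polynomial `∏ⱼ (1 - yⱼ T)` over the invariant ring. -/
noncomputable def yPoly : (invZ3 n k d)[X] :=
  ∑ j ∈ Finset.range (d + 1), Polynomial.monomial j ((-1) ^ j * eInv n k d j)

lemma coeff_yPoly {j : ℕ} (hj : j ≤ d) : (yPoly n k d).coeff j = (-1) ^ j * eInv n k d j := by
  simp only [yPoly, Polynomial.finsetSum_coeff, Polynomial.coeff_monomial,
    Finset.sum_ite_eq', Finset.mem_range_succ_iff, if_pos hj]

lemma natDegree_yPoly_le : (yPoly n k d).natDegree ≤ d :=
  Polynomial.natDegree_sum_le_of_forall_le _ _ fun _ hj =>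
    (Polynomial.natDegree_monomial_le _).trans (Finset.mem_range_succ_iff.1 hj)

lemma map_val_yPoly :
    (yPoly n k d).map (invZ3 n k d).val.toRingHom = reciprocalPoly (X ∘ Sum.inr ∘ Sum.inl) := by
  ext1 j
  rw [Polynomial.coeff_map]
  obtain hj | hj := le_or_gt j d
  · rw [coeff_yPoly hj, coeff_reciprocalPoly, map_mul, map_pow, map_neg, map_one]
    exact congrArg _ (intAeval_X_comp _ _).symm
  · rw [Polynomial.coeff_eq_zero_of_natDegree_lt (natDegree_yPoly_le.trans_lt hj), map_zero,
      Polynomial.coeff_eq_zero_of_natDegree_lt]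
    exact (natDegree_reciprocalPoly_le _).trans_lt (by rwa [Fintype.card_fin])

lemma natSeries_hInv_mul_yPoly : natSeries (hInv n k d) * (yPoly n k d : (invZ3 n k d)⟦X⟧) = 1 := by
  have hinj : Function.Injective (PowerSeries.map (invZ3 n k d).val.toRingHom) :=
    PowerSeries.map_injective _ Subtype.val_injective
  apply hinj
  rw [map_mul, map_one, ← Polynomial.polynomial_map_coe, map_val_yPoly, map_natSeries]
  have hcoe : (invZ3 n k d).val.toRingHom ∘ hInv n k d = hsymmVal (X ∘ Sum.inr ∘ Sum.inl) :=
    funext coe_hInv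
  rw [hcoe, natSeries_hsymmVal_mul_reciprocalPoly]

lemma map_invZ3Inclusion_yPoly :
    (yPoly 0 k d).map (invZ3Inclusion n k d).toRingHom = yPoly n k d := by
  simp only [yPoly, Polynomial.map_sum, Polynomial.map_monomial]
  refine Finset.sum_congr rfl fun j _ => congrArg _ ?_
  rw [map_mul, map_pow, map_neg, map_one]
  exact congrArg _ (invZ3Inclusion_yHom _)

end YPolynomial

section Quotient

variable {n k d : ℕ}

lemma coeff_reflect_yPoly : ((yPoly n k d).reflect d).coeff d = 1 := by
  rw [Polynomial.coeff_reflect, Polynomial.revAt_le le_rfl, Nat.sub_self,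
    coeff_yPoly (Nat.zero_le d), pow_zero, one_mul, eInv]
  exact (congrArg (yHom n k d) (Subtype.ext (esymm_zero (Fin d) ℤ))).trans (map_one _)

lemma natDegree_reflect_yPoly_le : ((yPoly n k d).reflect d).natDegree ≤ d :=
  Polynomial.natDegree_reflect_le.trans (max_le le_rfl natDegree_yPoly_le)

lemma monic_reflect_yPoly : ((yPoly n k d).reflect d).Monic :=
  Polynomial.monic_of_natDegree_le_of_coeff_eq_one d natDegree_reflect_yPoly_le coeff_reflect_yPoly

lemma natDegree_reflect_yPoly : ((yPoly n k d).reflect d).natDegree = d :=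
  Polynomial.natDegree_eq_of_le_of_coeff_ne_zero natDegree_reflect_yPoly_le
    (coeff_reflect_yPoly.trans_ne one_ne_zero)

variable {Q : Type*} [CommRing Q] [Algebra (MvPolynomial (Fin k) ℤ) Q]
  (ρ : invZ3 n k d →ₐ[MvPolynomial (Fin k) ℤ] Q)

lemma map_reflect_yPoly_dvd_prod (hdn : d ≤ n)
    (hrel : ∀ r, n - d < r → esymmConv (ρ ∘ xInv n k d) (ρ ∘ hInv n k d) r = 0) :
    ((yPoly n k d).reflect d).map ρ.toRingHom ∣
      ∏ i, (Polynomial.X - Polynomial.C (ρ (xInv n k d i))) := by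
  have hprod := reflect_reciprocalPoly (ρ ∘ xInv n k d)
  rw [Fintype.card_fin] at hprod
  simp only [Function.comp_apply] at hprod
  rw [← Polynomial.reflect_map, ← hprod]
  refine reflect_dvd_reflect_of_coeff_mul_eq_zero (H := natSeries (ρ ∘ hInv n k d)) hdn
    (Polynomial.natDegree_map_le.trans natDegree_yPoly_le) ?_ fun r hr => ?_
  · have h := congrArg (PowerSeries.map ρ.toRingHom) (natSeries_hInv_mul_yPoly (n := n))
    rwa [map_mul, map_one, ← Polynomial.polynomial_map_coe, map_natSeries] at h
  · rw [← (isUnit_one.neg.pow r).mul_right_eq_zero, ← esymmConv_eq_coeff, hrel r hr]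

lemma adjoin_range_comp_xInv [Algebra (invZ3 0 k d) Q]
    (hι : ∀ l, algebraMap (invZ3 0 k d) Q l = ρ (invZ3Inclusion n k d l))
    (hρ : Function.Surjective ρ) :
    Algebra.adjoin (invZ3 0 k d) (Set.range (ρ ∘ xInv n k d)) = ⊤ := by
  refine Algebra.eq_top_iff.2 fun q => ?_
  obtain ⟨a, rfl⟩ := hρ q
  rw [eq_sum_smul_prod_pow_mul_jacobiTrudi a, map_sum]
  refine Subalgebra.sum_mem _ fun m _ => ?_
  have hmem (l : invZ3 0 k d) : ρ (invZ3Inclusion n k d l) ∈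
      Algebra.adjoin (invZ3 0 k d) (Set.range (ρ ∘ xInv n k d)) :=
    hι l ▸ Subalgebra.algebraMap_mem _ l
  rw [Algebra.smul_def, map_mul ρ, map_mul ρ, ← (invZ3Inclusion n k d).commutes,
    ← invZ3Inclusion_jacobiTrudi, map_prod]
  refine mul_mem (hmem _) (mul_mem (prod_mem fun i _ => ?_) (hmem _))
  rw [map_pow]
  exact pow_mem (Algebra.subset_adjoin (Set.mem_range_self (f := ρ ∘ xInv n k d) i)) _

lemma isFactoredRootSystem_xInv [Algebra (invZ3 0 k d) Q] (hdn : d ≤ n)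
    (hι : ∀ l, algebraMap (invZ3 0 k d) Q l = ρ (invZ3Inclusion n k d l))
    (hρ : Function.Surjective ρ) (hker : relationIdeal n k d ≤ RingHom.ker ρ) :
    IsFactoredRootSystem ((yPoly 0 k d).reflect d) 1 (ρ ∘ xInv n k d) := by
  obtain ⟨-, hxy, hpow⟩ := (relationIdeal_le_ker_iff ρ).1 hker
  have hmap : (algebraMap (invZ3 0 k d) Q) = ρ.toRingHom.comp (invZ3Inclusion n k d).toRingHom :=
    RingHom.ext hι
  refine ⟨monic_reflect_yPoly, Polynomial.monic_one, fun i => ?_, ?_,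
    adjoin_range_comp_xInv ρ hι hρ⟩
  · rw [mul_one, aeval_reflect natDegree_yPoly_le, ← hpow i]
    refine Finset.sum_congr rfl fun j hj => ?_
    have he : invZ3Inclusion n k d (eInv 0 k d j) = eInv n k d j := invZ3Inclusion_yHom _
    rw [coeff_yPoly (Finset.mem_range_succ_iff.1 hj), Algebra.smul_def, hι, Function.comp_apply]
    simp only [map_mul, map_pow, map_neg, map_one, he]
    ring
  · rw [hmap, ← Polynomial.map_map, ← Polynomial.reflect_map (invZ3Inclusion n k d).toRingHom,
      map_invZ3Inclusion_yPoly]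
    exact map_reflect_yPoly_dvd_prod ρ hdn hxy

end Quotient

section QuotientSpan

open scoped Pointwise

variable {n k d : ℕ} {Q : Type*} [CommRing Q] [Algebra (MvPolynomial (Fin k) ℤ) Q]
  (ρ : invZ3 n k d →ₐ[MvPolynomial (Fin k) ℤ] Q)

lemma map_invZ3Inclusion_mem_span (hdk : d ≤ k)
    (hrel : ∀ r, k - d < r →
      esymmConv (algebraMap (MvPolynomial (Fin k) ℤ) Q ∘ X) (ρ ∘ hInv n k d) r = 0)
    (l : invZ3 0 k d) :
    ρ (invZ3Inclusion n k d l) ∈ Submodule.span (MvPolynomial (Fin k) ℤ)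
      (Set.range fun u : Fin d ↪o Fin k => jacobiTrudi (ρ ∘ hInv n k d) (boxPartition u)) := by
  have hneg (z : ℤ) (hz : z < 0) : (ρ ∘ hInv n k d) z = 0 :=
    (congrArg ρ (hInv_of_neg hz)).trans (map_zero ρ)
  rw [eq_sum_smul_prod_pow_mul_jacobiTrudi l, map_sum, map_sum]
  refine Submodule.sum_mem _ fun m _ => ?_
  rw [map_smul, map_smul, Fin.prod_univ_zero, one_mul, invZ3Inclusion_jacobiTrudi]
  have hmap := map_jacobiTrudi ρ.toRingHom (hInv n k d) fun j => m (Sum.inr (Sum.inl j))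
  exact Submodule.smul_mem _ _ (hmap ▸ jacobiTrudi_mem_span_boxPartition hdk hneg X hrel _)

lemma span_mul_substaircaseMonomials_eq_top (hdk : d ≤ k) (hdn : d ≤ n)
    (hρ : Function.Surjective ρ) (hker : relationIdeal n k d ≤ RingHom.ker ρ) :
    Submodule.span (MvPolynomial (Fin k) ℤ)
      ((Set.range fun u : Fin d ↪o Fin k => jacobiTrudi (ρ ∘ hInv n k d) (boxPartition u)) *
        substaircaseMonomials d d (ρ ∘ xInv n k d)) = ⊤ := by
  let : Algebra (invZ3 0 k d) Q := (ρ.comp (invZ3Inclusion n k d)).toRingHom.toAlgebra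
  have hspan :=
    (isFactoredRootSystem_xInv ρ hdn (fun _ => rfl) hρ hker).span_substaircaseMonomials_eq_top
  rw [natDegree_reflect_yPoly, Polynomial.natDegree_one, add_zero] at hspan
  refine Submodule.eq_top_iff'.2 fun q => ?_
  obtain ⟨c, hc, rfl⟩ := Submodule.mem_span_set.1 (Submodule.eq_top_iff'.1 hspan q)
  rw [← Submodule.span_mul_span]
  refine Submodule.sum_mem _ fun p hp => ?_
  simp only [Algebra.smul_def]
  exact Submodule.mul_mem_mul
    (map_invZ3Inclusion_mem_span ρ hdk ((relationIdeal_le_ker_iff ρ).1 hker).1 (c p))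
    (Submodule.subset_span (hc hp))

variable (n k d) in
/-- The index set of the basis: exponent words of substaircase monomials, and partitions in a
`d × (k - d)` box encoded by `boxPartition`. -/
abbrev BasisIndex : Type :=
  {a : Fin n → Fin d // IsPartialSubstaircase d d fun i => a i} × (Fin d ↪o Fin k)

/-- The product of a substaircase monomial with a Schur polynomial, in the invariant ring. -/
noncomputable def basisElem (p : BasisIndex n k d) : invZ3 n k d :=
  (∏ i, xInv n k d i ^ (p.1.1 i : ℕ)) * jacobiTrudi (hInv n k d) (boxPartition p.2)

lemma rename_schurPoly {τ : Type*} (f : Fin d → τ) (lam : Fin d → ℕ) :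
    rename f (schurPoly d lam) = jacobiTrudi (hsymmVal (X ∘ f)) lam := by
  have hh : (rename f).toRingHom ∘ hsymmZidx (Fin d) ℤ = hsymmVal (X ∘ f) :=
    funext fun z => (intAeval_X_comp f _).symm
  exact hh ▸ map_jacobiTrudi (rename f).toRingHom (hsymmZidx (Fin d) ℤ) lam

lemma coe_prod_pow_mul_jacobiTrudi (a : Fin n → ℕ) (lam : Fin d → ℕ) :
    (↑((∏ i, xInv n k d i ^ a i) * jacobiTrudi (hInv n k d) lam) :
      MvPolynomial (Fin n ⊕ Fin d ⊕ Fin k) ℤ) =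
      (∏ i, X (Sum.inl i) ^ a i) * rename (Sum.inr ∘ Sum.inl) (schurPoly d lam) := by
  rw [MulMemClass.coe_mul, SubmonoidClass.coe_finsetProd, coe_jacobiTrudi_hInv, rename_schurPoly]
  rfl

lemma range_basisElem (hd : 1 ≤ d) (hk : d ≤ k) :
    Set.range (basisElem (n := n) (k := k) (d := d)) = Subtype.val ⁻¹' CsetZ3 n k d := by
  ext p
  constructor
  · rintro ⟨⟨⟨a, ha⟩, u⟩, rfl⟩
    exact ⟨fun i => a i, (isSubstaircase_iff_isPartialSubstaircase hd).2 ha, boxPartition u,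
      antitone_boxPartition u, boxPartition_le u, coe_prod_pow_mul_jacobiTrudi _ _⟩
  · rintro ⟨a, ha, lam, hanti, hle, hp⟩
    obtain ⟨u, rfl⟩ := exists_boxPartition_eq hk hanti hle
    have ha' := (isSubstaircase_iff_isPartialSubstaircase hd).1 ha
    exact ⟨⟨⟨fun i => ⟨a i, ha'.1 i⟩, ha'⟩, u⟩,
      Subtype.ext ((coe_prod_pow_mul_jacobiTrudi _ _).trans hp.symm)⟩

lemma span_range_basisElem_eq_top (hdk : d ≤ k) (hdn : d ≤ n)
    (hρ : Function.Surjective ρ) (hker : relationIdeal n k d ≤ RingHom.ker ρ) :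
    Submodule.span (MvPolynomial (Fin k) ℤ) (Set.range fun p => ρ (basisElem p)) = ⊤ := by
  rw [eq_top_iff, ← span_mul_substaircaseMonomials_eq_top ρ hdk hdn hρ hker, Submodule.span_le]
  rintro _ ⟨_, ⟨u, rfl⟩, _, ⟨a, ha, rfl⟩, rfl⟩
  refine Submodule.subset_span ⟨⟨⟨fun i => ⟨a i, ha.1 i⟩, ha⟩, u⟩, ?_⟩
  have hmap := map_jacobiTrudi ρ.toRingHom (hInv n k d) (boxPartition u)
  simp only [basisElem, map_mul, map_prod, map_pow]
  exact (mul_comm _ _).trans (congrArg (· * _) hmap)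

end QuotientSpan

universe u

section LinearIndependence

variable {ι R M : Type*} [CommRing R] [AddCommGroup M] [Module R M]

lemma linearIndependent_of_dual_diagonal [NoZeroDivisors R] (v : ι → M) (f : ι → M →ₗ[R] R)
    (hne : ∀ i j, i ≠ j → f i (v j) = 0) (hself : ∀ i, f i (v i) ≠ 0) :
    LinearIndependent R v := by
  rw [linearIndependent_iff']
  intro s c hc i hi
  have hi' := congrArg (f i) hc
  rw [map_sum, map_zero, Finset.sum_eq_single_of_mem i hi fun j _ hj => by
    rw [map_smul, hne i j hj.symm, smul_zero], map_smul, smul_eq_mul] at hi'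
  exact (mul_eq_zero.1 hi').resolve_right (hself i)

lemma linearIndependent_of_span_eq_top [Finite ι] {v w : ι → M}
    (hv : Submodule.span R (Set.range v) = ⊤) (hw : LinearIndependent R w) :
    LinearIndependent R v := by
  have : Module.Finite R M := ⟨⟨(Set.finite_range v).toFinset, by simpa using hv⟩⟩
  refine OrzechProperty.injective_of_surjective_of_injective (Finsupp.linearCombination R w) _ hw ?_
  rw [← LinearMap.range_eq_top, Finsupp.range_linearCombination, hv]

end LinearIndependence

-- Quantifying over all quotient maps lets the two module structures on `A ⧸ I`, from `Submodule`
-- and from `Algebra`, be identified for an abstract `A`; for a ring of invariants this is too slow.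
lemma span_range_mk_eq_top_of_forall {ι R : Type*} {A : Type u} [CommRing R] [CommRing A]
    [Algebra R A] (I : Ideal A) (v : ι → A)
    (h : ∀ (Q : Type u) [CommRing Q] [Algebra R Q] (ρ : A →ₐ[R] Q), Function.Surjective ρ →
      I ≤ RingHom.ker ρ → Submodule.span R (Set.range fun i => ρ (v i)) = ⊤) :
    Submodule.span R (Set.range fun i => Ideal.Quotient.mk I (v i)) = ⊤ :=
  h _ (Ideal.Quotient.mkₐ R I) Ideal.Quotient.mk_surjective Ideal.mk_ker.ge

section Evaluation

variable {n k d : ℕ}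

/-- The evaluation of invariants at `x = a`, `y = b` with values in `ℤ[t_1, …, t_k]`. -/
noncomputable def evalInv (a : Fin n → MvPolynomial (Fin k) ℤ)
    (b : Fin d → MvPolynomial (Fin k) ℤ) :
    invZ3 n k d →ₐ[MvPolynomial (Fin k) ℤ] MvPolynomial (Fin k) ℤ :=
  AlgHom.mk ((aeval (Sum.elim a (Sum.elim b X))).comp (invZ3 n k d).val).toRingHom fun p =>
    (aeval_rename _ _ p).trans (aeval_X_left_apply p)

variable (a : Fin n → MvPolynomial (Fin k) ℤ) (b : Fin d → MvPolynomial (Fin k) ℤ)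

lemma evalInv_xInv (i : Fin n) : evalInv a b (xInv n k d i) = a i :=
  aeval_X _ _

lemma evalInv_yHom (p : symmetricSubalgebra (Fin d) ℤ) :
    evalInv a b (yHom n k d p) = aeval b p.1 :=
  aeval_rename _ _ _

lemma evalInv_hInv (z : ℤ) : evalInv a b (hInv n k d z) = hsymmVal b z :=
  evalInv_yHom a b _

lemma evalInv_eInv (r : ℕ) : evalInv a b (eInv n k d r) = aeval b (esymm (Fin d) ℤ r) := by
  rw [eInv, evalInv_yHom]

lemma relationIdeal_le_ker_evalInv (u : Fin d ↪ Fin k) {φ : Fin n → Fin d}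
    (hφ : Function.Surjective φ) :
    relationIdeal n k d ≤ RingHom.ker (evalInv (n := n) (X ∘ u ∘ φ) (X ∘ u)) := by
  let y : Fin d → MvPolynomial (Fin k) ℤ := X ∘ u
  have hh : evalInv (y ∘ φ) y ∘ hInv n k d = hsymmVal y := funext (evalInv_hInv (y ∘ φ) y)
  have hx : evalInv (y ∘ φ) y ∘ xInv n k d = y ∘ φ := funext (evalInv_xInv (y ∘ φ) y)
  have ht : algebraMap (MvPolynomial (Fin k) ℤ) (MvPolynomial (Fin k) ℤ) ∘ X = X := rfl
  obtain ⟨s, hs⟩ := hφ.hasRightInverse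
  have hys : (y ∘ φ) ∘ s = y := funext fun j => congrArg y (hs j)
  refine (relationIdeal_le_ker_iff (evalInv (y ∘ φ) y)).2
    ⟨fun r hr => ?_, fun r hr => ?_, fun i => ?_⟩
  · rw [hh, ht]
    exact esymmConv_hsymmVal_comp_eq_zero X u.injective (by simpa using hr)
  · rw [hh, hx, ← congrArg hsymmVal hys]
    exact esymmConv_hsymmVal_comp_eq_zero (y ∘ φ) hs.injective (by simpa using hr)
  · have hprod := sum_neg_one_pow_mul_pow_mul_esymm y (y (φ i))
    rw [Fintype.card_fin, Finset.prod_eq_zero (Finset.mem_univ (φ i)) (sub_self _)] at hprod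
    simp only [evalInv_xInv, evalInv_eInv, Function.comp_apply]
    exact hprod

variable (n k d) in
/-- The points `y = t ∘ u`, `x = y ∘ φ` at which all the relations vanish. -/
abbrev EvalPoint : Type :=
  (Fin d ↪o Fin k) × {φ : Fin n → Fin d // Function.Surjective φ}

lemma injective_xIndex :
    Function.Injective fun (p : EvalPoint n k d) (i : Fin n) => p.1 (p.2.1 i) := by
  rintro ⟨u, φ, hφ⟩ ⟨v, ψ, hψ⟩ h
  obtain rfl : u = v := by
    rw [← OrderEmbedding.range_inj, ← hφ.range_comp, ← hψ.range_comp]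
    exact congrArg Set.range h
  obtain rfl : φ = ψ := funext fun i => u.injective (congrFun h i)
  rfl

/-- The product that vanishes at `x = t ∘ w` for each `w ≠ z`. -/
noncomputable def lagrangeInv (z : Fin n → Fin k) : invZ3 n k d :=
  ∏ i, ∏ c ∈ Finset.univ.erase (z i), (xInv n k d i - algebraMap (MvPolynomial (Fin k) ℤ) _ (X c))

lemma evalInv_lagrangeInv (w z : Fin n → Fin k) :
    evalInv (X ∘ w) b (lagrangeInv z) =
      ∏ i, ∏ c ∈ Finset.univ.erase (z i), (X (w i) - X c) := by
  simp only [lagrangeInv, map_prod, map_sub, evalInv_xInv, AlgHom.commutes, Function.comp_apply]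
  rfl

lemma evalInv_lagrangeInv_of_ne {w z : Fin n → Fin k} (h : w ≠ z) :
    evalInv (X ∘ w) b (lagrangeInv z) = 0 := by
  obtain ⟨i, hi⟩ := Function.ne_iff.1 h
  rw [evalInv_lagrangeInv]
  exact Finset.prod_eq_zero (Finset.mem_univ i)
    (Finset.prod_eq_zero (Finset.mem_erase.2 ⟨hi, Finset.mem_univ _⟩) (sub_self _))

lemma evalInv_lagrangeInv_self_ne_zero (z : Fin n → Fin k) :
    evalInv (X ∘ z) b (lagrangeInv z) ≠ 0 := by
  rw [evalInv_lagrangeInv]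
  refine Finset.prod_ne_zero_iff.2 fun i _ => Finset.prod_ne_zero_iff.2 fun c hc => ?_
  exact sub_ne_zero.2 (X_injective.ne (Finset.ne_of_mem_erase hc).symm)

lemma linearIndependent_mk_lagrangeInv :
    LinearIndependent (MvPolynomial (Fin k) ℤ) fun p : EvalPoint n k d =>
      Ideal.Quotient.mk (relationIdeal n k d) (lagrangeInv fun i => p.1 (p.2.1 i)) := by
  let f (p : EvalPoint n k d) :=
    Ideal.Quotient.liftₐ (relationIdeal n k d) (evalInv (X ∘ p.1 ∘ p.2.1) (X ∘ p.1))
      fun _ ha => relationIdeal_le_ker_evalInv p.1.toEmbedding p.2.2 ha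
  exact linearIndependent_of_dual_diagonal _ (fun p => (f p).toLinearMap)
    (fun p q hpq => evalInv_lagrangeInv_of_ne _ (injective_xIndex.ne hpq))
    fun p => evalInv_lagrangeInv_self_ne_zero _ _

lemma span_range_mk_basisElem_eq_top (hdk : d ≤ k) (hdn : d ≤ n) :
    Submodule.span (MvPolynomial (Fin k) ℤ) (Set.range fun p : BasisIndex n k d =>
      Ideal.Quotient.mk (relationIdeal n k d) (basisElem p)) = ⊤ :=
  span_range_mk_eq_top_of_forall _ _ fun _ _ _ ρ hρ hker =>
    span_range_basisElem_eq_top ρ hdk hdn hρ hker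

lemma natCard_basisIndex : Nat.card (BasisIndex n k d) = Nat.card (EvalPoint n k d) := by
  rw [Nat.card_prod, Nat.card_prod, natCard_isPartialSubstaircase le_rfl, coverCount_self,
    natCard_surjective, mul_comm]

lemma natCard_evalPoint (hdk : d ≤ k) :
    Nat.card (EvalPoint n k d) = k.factorial / (k - d).factorial * stirling2 n d := by
  rw [Nat.card_prod, natCard_surjective, Nat.card_congr Set.powersetCard.ofFinEmbEquiv,
    Set.powersetCard.card, Nat.card_fin, ← Nat.descFactorial_eq_div hdk,
    Nat.descFactorial_eq_factorial_mul_choose]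
  ring

lemma linearIndependent_mk_basisElem (hdk : d ≤ k) (hdn : d ≤ n) :
    LinearIndependent (MvPolynomial (Fin k) ℤ) fun p : BasisIndex n k d =>
      Ideal.Quotient.mk (relationIdeal n k d) (basisElem p) := by
  obtain ⟨e⟩ := (Finite.card_eq (α := BasisIndex n k d)).1 natCard_basisIndex
  exact linearIndependent_of_span_eq_top (span_range_mk_basisElem_eq_top hdk hdn)
    (linearIndependent_mk_lagrangeInv.comp e e.injective)

end Evaluation

theorem CsetZ3_descends_to_basis_general (n k d : ℕ) (hd : 1 ≤ d) (hk : d ≤ k) (hn : d ≤ n) :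
    LinearIndependent (MvPolynomial (Fin k) ℤ)
      (fun q : ↥(Subtype.val ⁻¹' CsetZ3 n k d : Set ↥(invZ3 n k d)) =>
        Ideal.Quotient.mk (Ideal.span (Subtype.val ⁻¹' Jtgens3Z n k d : Set ↥(invZ3 n k d)))
          (q : ↥(invZ3 n k d))) ∧
    Submodule.span (MvPolynomial (Fin k) ℤ)
      (⇑(Ideal.Quotient.mk
          (Ideal.span (Subtype.val ⁻¹' Jtgens3Z n k d : Set ↥(invZ3 n k d)))) ''
        (Subtype.val ⁻¹' CsetZ3 n k d)) = ⊤ ∧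
    Module.Free (MvPolynomial (Fin k) ℤ)
      (↥(invZ3 n k d) ⧸ Ideal.span (Subtype.val ⁻¹' Jtgens3Z n k d : Set ↥(invZ3 n k d))) ∧
    Module.rank (MvPolynomial (Fin k) ℤ)
        (↥(invZ3 n k d) ⧸
          Ideal.span (Subtype.val ⁻¹' Jtgens3Z n k d : Set ↥(invZ3 n k d))) =
      ((Nat.factorial k / Nat.factorial (k - d) * stirling2 n d : ℕ) : Cardinal) := by
  have hli := linearIndependent_mk_basisElem hk hn
  have hspan := span_range_mk_basisElem_eq_top hk hn
  let B := Module.Basis.mk hli hspan.ge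
  rw [← range_basisElem hd hk]
  refine ⟨(linearIndepOn_range_iff (Function.Injective.of_comp hli.injective) _).2 hli, ?_,
    Module.Free.of_basis B, ?_⟩
  · rwa [← Set.range_comp]
  · rw [← B.mk_eq_rank'', ← Nat.cast_card, natCard_basisIndex, natCard_evalPoint hk]

/-- The set `C_{n,k,d}` descends to a `ℤ[t_1,…,t_k]`-module basis of
`ℤ[x,y,t]^{S_d}/I_{n,k,d}`; in particular this quotient is a free `ℤ[t_1,…,t_k]`-module
of rank `(k!/(k−d)!)·Stir(n,d)`. -/
theorem CsetZ3_descends_to_basis (n k d : ℕ) (hd : 1 ≤ d) (hk : d ≤ k) (hn : k ≤ n) :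
    LinearIndependent (MvPolynomial (Fin k) ℤ)
      (fun q : ↥(Subtype.val ⁻¹' CsetZ3 n k d : Set ↥(invZ3 n k d)) =>
        Ideal.Quotient.mk (Ideal.span (Subtype.val ⁻¹' Jtgens3Z n k d : Set ↥(invZ3 n k d)))
          (q : ↥(invZ3 n k d))) ∧
    Submodule.span (MvPolynomial (Fin k) ℤ)
      (⇑(Ideal.Quotient.mk
          (Ideal.span (Subtype.val ⁻¹' Jtgens3Z n k d : Set ↥(invZ3 n k d)))) ''
        (Subtype.val ⁻¹' CsetZ3 n k d)) = ⊤ ∧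
    Module.Free (MvPolynomial (Fin k) ℤ)
      (↥(invZ3 n k d) ⧸ Ideal.span (Subtype.val ⁻¹' Jtgens3Z n k d : Set ↥(invZ3 n k d))) ∧
    Module.rank (MvPolynomial (Fin k) ℤ)
        (↥(invZ3 n k d) ⧸
          Ideal.span (Subtype.val ⁻¹' Jtgens3Z n k d : Set ↥(invZ3 n k d))) =
      ((Nat.factorial k / Nat.factorial (k - d) * stirling2 n d : ℕ) : Cardinal) :=
  CsetZ3_descends_to_basis_general n k d hd hk (hk.trans hn)
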